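/- arXiv:1707.08210 — 2 statements merged into one kernel-verified Lean document; each statement's English description precedes it below -/
import Mathlib

section
/- Let ε₁ = (√3·α₁/2)³, where α₁ is the smallest modulus of a zero of U₋ on the open ray arg z = π/3, and fix ε with 0 < ε < ε₁. Then the set of eigenvalues of the model operator T(ε) is the range of a strictly increasing sequence (λ_k)_{k≥1} of positive real numbers tending to +∞, and λ_k·ε/(πk/2)² → 1 as k → ∞. -/
open Complex MeasureTheory Real

noncomputable section

/-- `w` is an entire solution of the Airy equation `w'' = z·w`
with prescribed (real) values of `w` and `w'` at the origin. -/
def IsAiry (w : ℂ → ℂ) (w0 w0' : ℝ) : Prop :=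
  Differentiable ℂ w ∧ Differentiable ℂ (deriv w) ∧
  (∀ z : ℂ, deriv (deriv w) z = z * w z) ∧
  w 0 = (w0 : ℂ) ∧ deriv w 0 = (w0' : ℂ)

/-- `Ai` is the standard Airy function of the first kind. -/
def IsAiryAi (Ai : ℂ → ℂ) : Prop :=
  IsAiry Ai ((3 : ℝ) ^ (-(2 : ℝ)/3) / Real.Gamma (2/3))
    (-((3 : ℝ) ^ (-(1 : ℝ)/3)) / Real.Gamma (1/3))

/-- `Bi` is the standard Airy function of the second kind. -/
def IsAiryBi (Bi : ℂ → ℂ) : Prop :=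
  IsAiry Bi ((3 : ℝ) ^ (-(1 : ℝ)/6) / Real.Gamma (2/3))
    ((3 : ℝ) ^ ((1 : ℝ)/6) / Real.Gamma (1/3))

/-- `U₋ = -√3·Ai + Bi`. -/
def Uminus (Ai Bi : ℂ → ℂ) : ℂ → ℂ := fun z => -(Real.sqrt 3 : ℂ) * Ai z + Bi z

/-- `U₊ = √3·Ai + Bi`. -/
def Uplus (Ai Bi : ℂ → ℂ) : ℂ → ℂ := fun z => (Real.sqrt 3 : ℂ) * Ai z + Bi z

/-- The moduli of the zeros of `U` on the open ray `arg z = π/3`. -/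
def rayZeroModuli (U : ℂ → ℂ) : Set ℝ :=
  {r : ℝ | 0 < r ∧ U ((r : ℂ) * Complex.exp ((π/3 : ℝ) * Complex.I)) = 0}

/-- `lam` is an eigenvalue of the model operator `T(ε) y = -ε⁻¹ y'' + i x y`
with Dirichlet boundary conditions on `[-1,1]`. -/
def IsModelEigenvalue (ε : ℝ) (lam : ℂ) : Prop :=
  ∃ y : ℝ → ℂ, ContDiff ℝ 2 y ∧
    (∃ x ∈ Set.Icc (-1 : ℝ) 1, y x ≠ 0) ∧
    (∀ x ∈ Set.Ioo (-1 : ℝ) 1,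
      -(ε⁻¹ : ℂ) * deriv (deriv y) x + Complex.I * (x : ℂ) * y x = lam * y x) ∧
    y (-1) = 0 ∧ y 1 = 0

/-- `w` is an entire solution of the Airy equation, and `w'` is its derivative. -/
structure AirySolution (w w' : ℂ → ℂ) : Prop where
  hasDerivAt : ∀ z, HasDerivAt w (w' z) z
  hasDerivAt_deriv : ∀ z, HasDerivAt w' (z * w z) z

/-- The solutions of the Airy equation with `(f, f') = (1, 0)` and `(g, g') = (0, 1)` at `0`. -/
structure AiryBasis (f f' g g' : ℂ → ℂ) : Prop where
  left : AirySolution f f'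
  right : AirySolution g g'
  left_zero : f 0 = 1
  deriv_left_zero : f' 0 = 0
  right_zero : g 0 = 0
  deriv_right_zero : g' 0 = 1

/-! ### Derivatives of real functions built from complex ones -/

theorem HasDerivAt.complex_re {u : ℝ → ℂ} {u' : ℂ} {t : ℝ} (h : HasDerivAt u u' t) :
    HasDerivAt (fun s => (u s).re) u'.re t :=
  reCLM.hasFDerivAt.comp_hasDerivAt t h

theorem HasDerivAt.complex_im {u : ℝ → ℂ} {u' : ℂ} {t : ℝ} (h : HasDerivAt u u' t) :
    HasDerivAt (fun s => (u s).im) u'.im t :=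
  imCLM.hasFDerivAt.comp_hasDerivAt t h

theorem HasDerivAt.comp_complex_line {w : ℂ → ℂ} {w' : ℂ} (c d : ℂ) {t : ℝ}
    (h : HasDerivAt w w' (c + t * d)) :
    HasDerivAt (fun s : ℝ => w (c + s * d)) (d * w') t := by
  have h₁ : HasDerivAt (fun s : ℝ => c + (s : ℂ) * d) d t := by
    simpa using ((ofRealCLM.hasDerivAt (x := t)).mul_const d).const_add c
  exact h.scomp t h₁

/-- A differential inequality `E' ≤ K E` integrates to an exponential bound. -/
theorem le_mul_exp_of_hasDerivAt_le {E E' : ℝ → ℝ} {K x₀ x₁ : ℝ} (hx : x₀ ≤ x₁)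
    (hE : ∀ x ∈ Set.Icc x₀ x₁, HasDerivAt E (E' x) x)
    (hK : ∀ x ∈ Set.Icc x₀ x₁, E' x ≤ K * E x) :
    E x₁ ≤ E x₀ * Real.exp (K * (x₁ - x₀)) := by
  have hd : ∀ x ∈ Set.Icc x₀ x₁, HasDerivAt (fun x => E x * Real.exp (-(K * x)))
      (E' x * Real.exp (-(K * x)) + E x * (Real.exp (-(K * x)) * -(K * 1))) x := fun x hx =>
    (hE x hx).mul ((((hasDerivAt_id x).const_mul K).neg).exp)
  have hanti : AntitoneOn (fun x => E x * Real.exp (-(K * x))) (Set.Icc x₀ x₁) := by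
    refine antitoneOn_of_deriv_nonpos (convex_Icc _ _)
      (fun x hx => (hd x hx).continuousAt.continuousWithinAt)
      (fun x hx => (hd x (interior_subset hx)).differentiableAt.differentiableWithinAt) ?_
    intro x hx
    rw [(hd x (interior_subset hx)).deriv]
    nlinarith [hK x (interior_subset hx), Real.exp_pos (-(K * x))]
  have h := hanti (Set.left_mem_Icc.2 hx) (Set.right_mem_Icc.2 hx) hx
  have h2 := mul_le_mul_of_nonneg_right h (Real.exp_pos (K * x₁)).le
  simp only [mul_assoc, ← Real.exp_add] at h2
  rw [show -(K * x₁) + K * x₁ = 0 by ring, show -(K * x₀) + K * x₁ = K * (x₁ - x₀) by ring] at h2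
  simpa using h2

/-- A function on an interval with nonnegative derivative which vanishes at both ends has zero
derivative inside. -/
theorem eq_zero_of_hasDerivAt_nonneg_of_endpoints {F F' : ℝ → ℝ} {x₀ x₁ : ℝ}
    (hF : ∀ x ∈ Set.Icc x₀ x₁, HasDerivAt F (F' x) x)
    (h0 : ∀ x ∈ Set.Icc x₀ x₁, 0 ≤ F' x) (hx₀ : F x₀ = 0) (hx₁ : F x₁ = 0) :
    ∀ x ∈ Set.Ioo x₀ x₁, F' x = 0 := by
  have hmono : MonotoneOn F (Set.Icc x₀ x₁) := by
    refine monotoneOn_of_deriv_nonneg (convex_Icc _ _)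
      (fun x hx => (hF x hx).continuousAt.continuousWithinAt)
      (fun x hx => (hF x (interior_subset hx)).differentiableAt.differentiableWithinAt) ?_
    intro x hx
    rw [(hF x (interior_subset hx)).deriv]
    exact h0 x (interior_subset hx)
  intro x hx
  have hle : x₀ ≤ x₁ := (hx.1.trans hx.2).le
  have hz : ∀ s ∈ Set.Icc x₀ x₁, F s = 0 := fun s hs => le_antisymm
    (hx₁ ▸ hmono hs (Set.right_mem_Icc.2 hle) hs.2) (hx₀ ▸ hmono (Set.left_mem_Icc.2 hle) hs hs.1)
  have he : F =ᶠ[nhds x] fun _ => 0 := by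
    filter_upwards [Icc_mem_nhds hx.1 hx.2] with s hs using hz s hs
  exact (hF x (Set.Ioo_subset_Icc_self hx)).unique
    ((hasDerivAt_const x (0 : ℝ)).congr_of_eventuallyEq he)

/-- Growth of the energy `‖y'‖² + ‖κ‖² ‖y‖²` along solutions of `y'' = -(κ² + r) y`. -/
theorem energy_le {y y' r : ℝ → ℂ} {κ : ℂ} {ρ x₀ x₁ : ℝ} (hκ : κ ≠ 0) (hx : x₀ ≤ x₁)
    (hy : ∀ x, HasDerivAt y (y' x) x)
    (hy' : ∀ x, HasDerivAt y' (-(κ ^ 2 + r x) * y x) x)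
    (hr : ∀ x ∈ Set.Icc x₀ x₁, ‖r x‖ ≤ ρ) :
    ‖y' x₁‖ ^ 2 + ‖κ‖ ^ 2 * ‖y x₁‖ ^ 2 ≤ (‖y' x₀‖ ^ 2 + ‖κ‖ ^ 2 * ‖y x₀‖ ^ 2) *
      Real.exp ((2 * |κ.im| + ρ / ‖κ‖) * (x₁ - x₀)) := by
  refine le_mul_exp_of_hasDerivAt_le (E := fun x => ‖y' x‖ ^ 2 + ‖κ‖ ^ 2 * ‖y x‖ ^ 2) hx
    (fun x _ => (hy' x).norm_sq.add ((hy x).norm_sq.const_mul _)) ?_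
  intro x hx
  have hκ0 : 0 < ‖κ‖ := norm_pos_iff.2 hκ
  have key : 2 * inner ℝ (y' x) (-(κ ^ 2 + r x) * y x) + ‖κ‖ ^ 2 * (2 * inner ℝ (y x) (y' x))
      = 2 * ((starRingEnd ℂ (y' x) * y x) * (κ * (starRingEnd ℂ κ - κ) - r x)).re := by
    have : ((‖κ‖ ^ 2 : ℝ) : ℂ) = κ * starRingEnd ℂ κ := by
      rw [Complex.mul_conj, Complex.normSq_eq_norm_sq]
    have h2 : ‖κ‖ ^ 2 = κ.re * κ.re + κ.im * κ.im := by
      rw [← Complex.normSq_eq_norm_sq, Complex.normSq_apply]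
    rw [h2]
    simp [Complex.inner, pow_two]
    ring
  have hconj : ‖starRingEnd ℂ κ - κ‖ = 2 * |κ.im| := by
    have : starRingEnd ℂ κ - κ = ((-2 * κ.im : ℝ) : ℂ) * I := by
      apply Complex.ext <;> simp; ring
    rw [this, norm_mul, norm_I, mul_one, Complex.norm_real, Real.norm_eq_abs, abs_mul]; simp
  have hb : ((starRingEnd ℂ (y' x) * y x) * (κ * (starRingEnd ℂ κ - κ) - r x)).re
      ≤ ‖y' x‖ * ‖y x‖ * (‖κ‖ * (2 * |κ.im|) + ρ) := by
    refine (Complex.re_le_norm _).trans ?_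
    rw [norm_mul, norm_mul, Complex.norm_conj]
    gcongr
    refine (norm_sub_le _ _).trans ?_
    rw [norm_mul, hconj]
    gcongr
    exact hr x hx
  rw [key]
  have hρ : 0 ≤ ρ := (norm_nonneg _).trans (hr x hx)
  have hC : 0 ≤ 2 * |κ.im| + ρ / ‖κ‖ := by positivity
  have hsplit : ‖κ‖ * (2 * |κ.im|) + ρ = ‖κ‖ * (2 * |κ.im| + ρ / ‖κ‖) := by field_simp
  rw [hsplit] at hb
  nlinarith [mul_nonneg hC (sq_nonneg (‖y' x‖ - ‖κ‖ * ‖y x‖))]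

/-! ### Algebra of Airy solutions -/

namespace AirySolution

variable {w w' v v' : ℂ → ℂ}

theorem linear_combination (hw : AirySolution w w') (hv : AirySolution v v') (α β : ℂ) :
    AirySolution (fun z => α * w z + β * v z) (fun z => α * w' z + β * v' z) where
  hasDerivAt z := ((hw.hasDerivAt z).const_mul α).add ((hv.hasDerivAt z).const_mul β)
  hasDerivAt_deriv z := by
    convert! ((hw.hasDerivAt_deriv z).const_mul α).add ((hv.hasDerivAt_deriv z).const_mul β) using 1
    ring

theorem conj (hw : AirySolution w w') :
    AirySolution (fun z => starRingEnd ℂ (w (starRingEnd ℂ z)))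
      (fun z => starRingEnd ℂ (w' (starRingEnd ℂ z))) where
  hasDerivAt z := by
    simpa [Function.comp_def] using (hw.hasDerivAt (starRingEnd ℂ z)).conj_conj
  hasDerivAt_deriv z := by
    simpa [Function.comp_def] using (hw.hasDerivAt_deriv (starRingEnd ℂ z)).conj_conj

theorem continuous (hw : AirySolution w w') : Continuous w :=
  continuous_iff_continuousAt.2 fun z => (hw.hasDerivAt z).continuousAt

theorem differentiable (hw : AirySolution w w') : Differentiable ℂ w :=
  fun z => (hw.hasDerivAt z).differentiableAt

/-- The Wronskian of two solutions is constant. -/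
theorem wronskian_eq (hw : AirySolution w w') (hv : AirySolution v v') (z : ℂ) :
    w z * v' z - w' z * v z = w 0 * v' 0 - w' 0 * v 0 := by
  have hd : ∀ z, HasDerivAt (fun z => w z * v' z - w' z * v z) 0 z := fun z => by
    convert! ((hw.hasDerivAt z).mul (hv.hasDerivAt_deriv z)).sub
      ((hw.hasDerivAt_deriv z).mul (hv.hasDerivAt z)) using 1
    ring
  exact is_const_of_deriv_eq_zero (fun z => (hd z).differentiableAt) (fun z => (hd z).deriv) z 0

theorem hasDerivAt_line (hw : AirySolution w w') (c d : ℂ) (t : ℝ) :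
    HasDerivAt (fun s : ℝ => w (c + s * d)) (d * w' (c + t * d)) t :=
  HasDerivAt.comp_complex_line c d (hw.hasDerivAt _)

theorem hasDerivAt_deriv_line (hw : AirySolution w w') (c d : ℂ) (t : ℝ) :
    HasDerivAt (fun s : ℝ => d * w' (c + s * d)) (d ^ 2 * (c + t * d) * w (c + t * d)) t := by
  convert! (HasDerivAt.comp_complex_line c d (hw.hasDerivAt_deriv (c + t * d))).const_mul d using 1
  ring

end AirySolution

namespace AiryBasis

variable {f f' g g' w w' : ℂ → ℂ}

theorem wronskian (h : AiryBasis f f' g g') (z : ℂ) : f z * g' z - f' z * g z = 1 := by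
  rw [h.left.wronskian_eq h.right, h.left_zero, h.deriv_left_zero, h.deriv_right_zero]
  simp

theorem eq_linear_combination (h : AiryBasis f f' g g') (hw : AirySolution w w') (z : ℂ) :
    w z = w 0 * f z + w' 0 * g z ∧ w' z = w 0 * f' z + w' 0 * g' z := by
  have h1 := hw.wronskian_eq h.left z
  have h2 := hw.wronskian_eq h.right z
  have h3 := h.wronskian z
  rw [h.left_zero, h.deriv_left_zero] at h1
  rw [h.right_zero, h.deriv_right_zero] at h2
  constructor
  · linear_combination (-w z) * h3 + f z * h2 - g z * h1
  · linear_combination (-w' z) * h3 + f' z * h2 - g' z * h1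

theorem conj_left (h : AiryBasis f f' g g') (z : ℂ) :
    f (starRingEnd ℂ z) = starRingEnd ℂ (f z) ∧ f' (starRingEnd ℂ z) = starRingEnd ℂ (f' z) := by
  have := h.eq_linear_combination h.left.conj z
  simp only [map_zero, h.left_zero, h.deriv_left_zero, map_one, one_mul, zero_mul, add_zero] at this
  exact ⟨by rw [← this.1]; simp, by rw [← this.2]; simp⟩

theorem conj_right (h : AiryBasis f f' g g') (z : ℂ) :
    g (starRingEnd ℂ z) = starRingEnd ℂ (g z) ∧ g' (starRingEnd ℂ z) = starRingEnd ℂ (g' z) := by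
  have := h.eq_linear_combination h.right.conj z
  simp only [map_zero, h.right_zero, h.deriv_right_zero, map_one, one_mul, zero_mul,
    zero_add] at this
  exact ⟨by rw [← this.1]; simp, by rw [← this.2]; simp⟩

/-- A nontrivial solution does not vanish together with its derivative. -/
theorem eq_zero_of_eq_zero (h : AiryBasis f f' g g') {α β z : ℂ}
    (h1 : α * f z + β * g z = 0) (h2 : α * f' z + β * g' z = 0) : α = 0 ∧ β = 0 := by
  have h3 := h.wronskian z
  constructor
  · linear_combination g' z * h1 - g z * h2 - α * h3
  · linear_combination f z * h2 - f' z * h1 - β * h3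

end AiryBasis

namespace AirySolution

variable {w w' : ℂ → ℂ}

/-- If a solution vanishes on an open segment of a line, so does its derivative. -/
theorem deriv_eq_zero_of_line {c d : ℂ} {x₀ x₁ t : ℝ} (hw : AirySolution w w') (hd : d ≠ 0)
    (h0 : ∀ s ∈ Set.Ioo x₀ x₁, w (c + s * d) = 0) (ht : t ∈ Set.Ioo x₀ x₁) :
    w' (c + t * d) = 0 := by
  have he : (fun s : ℝ => w (c + s * d)) =ᶠ[nhds t] fun _ => 0 := by
    filter_upwards [isOpen_Ioo.mem_nhds ht] with s hs using h0 s hs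
  have := (hw.hasDerivAt_line c d t).unique
    ((hasDerivAt_const t (0 : ℂ)).congr_of_eventuallyEq he)
  exact (mul_eq_zero.1 this).resolve_left hd

/-- A solution vanishing at the ends of a short vertical segment, or of one which is not too far
to the right, vanishes on the segment. -/
theorem eq_zero_of_vertical {a b : ℝ} (hw : AirySolution w w') (hb : 0 < b)
    (ha : a < 1 / (4 * b ^ 2)) (h1 : w (a + b * I) = 0) (h2 : w (a - b * I) = 0) :
    ∀ t ∈ Set.Ioo (-b) b, w (a + t * I) = 0 := by
  set y : ℝ → ℂ := fun t => w (a + t * I) with hy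
  set y' : ℝ → ℂ := fun t => I * w' (a + t * I) with hy'
  have hd : ∀ t, HasDerivAt y (y' t) t := fun t => hw.hasDerivAt_line a I t
  have hd' : ∀ t, HasDerivAt y' (-(a + t * I) * y t) t := fun t => by
    convert! hw.hasDerivAt_deriv_line a I t using 1
    simp [hy]
  have hF : ∀ t ∈ Set.Icc (-b) b, HasDerivAt
      (fun t => (y t).re * (y' t).re + (y t).im * (y' t).im
        + t / (2 * b ^ 2) * ((y t).re ^ 2 + (y t).im ^ 2))
      (((y' t).re + t / (2 * b ^ 2) * (y t).re) ^ 2 + ((y' t).im + t / (2 * b ^ 2) * (y t).im) ^ 2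
        + (1 / (2 * b ^ 2) - a - (t / (2 * b ^ 2)) ^ 2) * ((y t).re ^ 2 + (y t).im ^ 2)) t := by
    intro t _
    convert! ((((hd t).complex_re.mul (hd' t).complex_re).add
      ((hd t).complex_im.mul (hd' t).complex_im)).add
      (((hasDerivAt_id t).div_const (2 * b ^ 2)).mul
        (((hd t).complex_re.pow 2).add ((hd t).complex_im.pow 2)))) using 1
    simp
    ring
  have hT : ∀ t ∈ Set.Icc (-b) b, 0 < 1 / (2 * b ^ 2) - a - (t / (2 * b ^ 2)) ^ 2 := by
    intro t ht
    have h1 : (t / (2 * b ^ 2)) ^ 2 ≤ 1 / (4 * b ^ 2) := by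
      have : t ^ 2 ≤ b ^ 2 := by nlinarith [ht.1, ht.2]
      rw [div_pow, div_le_div_iff₀ (by positivity) (by positivity)]
      nlinarith [sq_nonneg b, sq_nonneg (b ^ 2)]
    have h2 : 1 / (2 * b ^ 2) = 1 / (4 * b ^ 2) + 1 / (4 * b ^ 2) := by field_simp; norm_num
    linarith
  have hyb : y b = 0 := h1
  have hyb' : y (-b) = 0 := by simpa [hy, sub_eq_add_neg] using h2
  have hz := eq_zero_of_hasDerivAt_nonneg_of_endpoints hF (fun t ht => by
    have := hT t ht; positivity) (by simp [hyb']) (by simp [hyb])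
  intro t ht
  have h3 := hz t ht
  have h4 := hT t (Set.Ioo_subset_Icc_self ht)
  have h5 : (y t).re ^ 2 + (y t).im ^ 2 ≤ 0 := by
    by_contra hcon
    push Not at hcon
    have := mul_pos h4 hcon
    nlinarith [sq_nonneg ((y' t).re + t / (2 * b ^ 2) * (y t).re),
      sq_nonneg ((y' t).im + t / (2 * b ^ 2) * (y t).im)]
  change y t = 0
  apply Complex.ext <;> simp <;> nlinarith [sq_nonneg (y t).re, sq_nonneg (y t).im]

/-- WKB approximation on a vertical segment: if the logarithmic derivative at the real point `k²`
is close to `k`, then `w (k² + i t) ≈ w (k²) exp (i k t)`. -/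
theorem norm_exp_mul_sub_le {k b t M w₀ : ℝ} (hw : AirySolution w w') (hk : 1 ≤ |k|)
    (hb : 0 ≤ b) (ht : t ∈ Set.Icc 0 b) (hw₀ : w ((k ^ 2 : ℝ) : ℂ) = w₀)
    (hM : w' ((k ^ 2 : ℝ) : ℂ) = M * w₀) (hMk : |M - k| ≤ 1) :
    ‖Complex.exp (-(k * t * I)) * w ((k ^ 2 : ℝ) + t * I) - w₀‖
      ≤ (b ^ 2 * Real.sqrt (5 * Real.exp (b ^ 2)) + 1) / |k| * |w₀| := by
  have hk0 : k ≠ 0 := by rintro rfl; norm_num at hk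
  have hkpos : 0 < |k| := abs_pos.2 hk0
  set u : ℝ → ℂ := fun t => w ((k ^ 2 : ℝ) + t * I) with hu
  set u' : ℝ → ℂ := fun t => I * w' ((k ^ 2 : ℝ) + t * I) with hu'
  have hd : ∀ t, HasDerivAt u (u' t) t := fun t => hw.hasDerivAt_line _ I t
  have hd' : ∀ t, HasDerivAt u' (-((k : ℂ) ^ 2 + t * I) * u t) t := fun t => by
    convert! hw.hasDerivAt_deriv_line ((k ^ 2 : ℝ) : ℂ) I t using 1
    simp [hu]
  have hu0 : u 0 = w₀ := by simp only [hu]; rw [← hw₀]; simp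
  have hu0' : u' 0 = I * (M * w₀) := by simp only [hu']; rw [← hM]; simp
  set B := Real.sqrt (5 * Real.exp (b ^ 2)) with hB
  have hB0 : 0 ≤ B := Real.sqrt_nonneg _
  have hub : ∀ s ∈ Set.Icc 0 b, ‖u s‖ ≤ B * |w₀| := by
    intro s hs
    have h := energy_le (r := fun s => (s : ℂ) * I) (κ := (k : ℂ)) (ρ := b) (x₀ := 0) (x₁ := s)
      (by exact_mod_cast hk0) hs.1 hd hd' (fun x hx => by
        simp only [norm_mul, Complex.norm_real, norm_I, mul_one, Real.norm_eq_abs]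
        rw [abs_of_nonneg hx.1]; exact hx.2.trans hs.2)
    rw [hu0, hu0'] at h
    simp only [norm_mul, norm_I, Complex.norm_real, Real.norm_eq_abs, ofReal_im, abs_zero,
      mul_zero, zero_add, one_mul, sub_zero, mul_pow, sq_abs] at h
    have he : Real.exp (b / |k| * s) ≤ Real.exp (b ^ 2) := by
      apply Real.exp_le_exp.2
      have : b / |k| ≤ b := div_le_self hb hk
      nlinarith [hs.1, hs.2, mul_le_mul this hs.2 hs.1 hb]
    have hMb : M ^ 2 ≤ 4 * k ^ 2 := by
      have h1 : |M| ≤ 2 * |k| := by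
        have := abs_sub_abs_le_abs_sub M k
        linarith
      nlinarith [sq_abs M, sq_abs k, abs_nonneg M, abs_nonneg k]
    have h2 : k ^ 2 * ‖u s‖ ^ 2 ≤ k ^ 2 * (5 * Real.exp (b ^ 2) * w₀ ^ 2) := by
      calc k ^ 2 * ‖u s‖ ^ 2 ≤ (M ^ 2 * w₀ ^ 2 + k ^ 2 * w₀ ^ 2) * Real.exp (b / |k| * s) := by
            nlinarith [sq_nonneg ‖u' s‖]
        _ ≤ (4 * k ^ 2 * w₀ ^ 2 + k ^ 2 * w₀ ^ 2) * Real.exp (b ^ 2) := by gcongr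
        _ = _ := by ring
    have h3 := le_of_mul_le_mul_left h2 (by positivity)
    have h4 : ‖u s‖ ^ 2 ≤ (B * |w₀|) ^ 2 := by
      rw [mul_pow, sq_abs, hB, Real.sq_sqrt (by positivity)]; exact h3
    exact (sq_le_sq₀ (norm_nonneg _) (by positivity)).1 h4
  have hexp : ∀ (m : ℝ) (s : ℝ), ‖Complex.exp (m * s * I)‖ = 1 := fun m s => by
    rw [← ofReal_mul, Complex.norm_exp_ofReal_mul_I]
  have htransport : ∀ m : ℝ, m ^ 2 = k ^ 2 →
      ‖Complex.exp (-(m * t * I)) * (u' t + m * I * u t) - (u' 0 + m * I * u 0)‖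
        ≤ b ^ 2 * B * |w₀| := by
    intro m hm
    have hm' : (m : ℂ) ^ 2 = (k : ℂ) ^ 2 := by exact_mod_cast hm
    have hder : ∀ s : ℝ, HasDerivAt (fun s : ℝ => Complex.exp (-(m * s * I)) *
        (u' s + m * I * u s)) (Complex.exp (-(m * s * I)) * (-(s * I) * u s)) s := by
      intro s
      have h1 : HasDerivAt (fun s : ℝ => Complex.exp (-(m * s * I)))
          (Complex.exp (-(m * s * I)) * -(m * 1 * I)) s := by
        exact ((((ofRealCLM.hasDerivAt (x := s)).const_mul (m : ℂ)).mul_const I).neg).cexp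
      convert! h1.mul ((hd' s).add ((hd s).const_mul (m * I))) using 1
      simp only [Pi.add_apply]
      linear_combination Complex.exp (-(m * s * I)) * u s * (-hm' + m ^ 2 * I_sq)
    have h := norm_image_sub_le_of_norm_deriv_le_segment' (a := 0) (b := b) (C := b * (B * |w₀|))
      (fun s hs => (hder s).hasDerivWithinAt) (fun s hs => by
        have := hexp (-m) s
        rw [norm_mul, show -((m : ℂ) * s * I) = ((-m : ℝ) : ℂ) * s * I by push_cast; ring, this,
          norm_mul, norm_neg, norm_mul, norm_I, Complex.norm_real, Real.norm_eq_abs,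
          abs_of_nonneg hs.1]
        have h1 := hub s ⟨hs.1, hs.2.le⟩
        have := mul_le_mul hs.2.le h1 (norm_nonneg _) hb
        linarith) t ht
    simp only [ofReal_zero, mul_zero, zero_mul, neg_zero, Complex.exp_zero, one_mul, sub_zero] at h
    refine h.trans ?_
    have : b * (B * |w₀|) * t ≤ b * (B * |w₀|) * b := by
      have := ht.2
      gcongr
    linarith
  have hP := htransport k rfl
  have hN := htransport (-k) (by ring)
  rw [hu0, hu0'] at hP hN
  set e := Complex.exp (-(k * t * I)) with he
  have hN' : ‖e * (u' t - k * I * u t)‖ ≤ (1 + b ^ 2 * B) * |w₀| := by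
    have h1 : ‖e * (u' t - k * I * u t)‖
        = ‖Complex.exp (-(((-k : ℝ) : ℂ) * t * I)) * (u' t + ((-k : ℝ) : ℂ) * I * u t)‖ := by
      have := hexp (-k) t
      have h2 := hexp k t
      rw [norm_mul, norm_mul, he, show -((k : ℂ) * t * I) = ((-k : ℝ) : ℂ) * t * I by
        push_cast; ring, this, show -(((-k : ℝ) : ℂ) * t * I) = (k : ℂ) * t * I by push_cast; ring,
        h2]
      congr 2
      push_cast; ring
    have h3 : ‖I * (M * w₀) + ((-k : ℝ) : ℂ) * I * w₀‖ ≤ |w₀| := by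
      rw [show I * ((M : ℂ) * w₀) + ((-k : ℝ) : ℂ) * I * w₀ = I * ((M - k : ℝ) : ℂ) * (w₀ : ℂ) by
        push_cast; ring, norm_mul, norm_mul, norm_I, Complex.norm_real, Complex.norm_real,
        Real.norm_eq_abs, Real.norm_eq_abs, one_mul]
      exact mul_le_of_le_one_left (abs_nonneg _) hMk
    rw [h1]
    refine (norm_le_norm_add_norm_sub' _ (I * (M * w₀) + ((-k : ℝ) : ℂ) * I * w₀)).trans ?_
    linarith
  have hkC : (k : ℂ) ≠ 0 := by exact_mod_cast hk0
  have hid : e * u t - w₀ = ((e * (u' t + k * I * u t) - (I * (M * w₀) + k * I * w₀))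
      + I * ((M - k : ℝ) : ℂ) * w₀ - e * (u' t - k * I * u t)) / (2 * k * I) := by
    rw [eq_div_iff (by simp [hkC])]
    push_cast
    ring
  rw [hid, norm_div]
  have hden : ‖2 * (k : ℂ) * I‖ = 2 * |k| := by simp
  rw [hden, div_mul_eq_mul_div, div_le_div_iff₀ (by positivity) hkpos]
  have h3 : ‖I * ((M - k : ℝ) : ℂ) * (w₀ : ℂ)‖ ≤ |w₀| := by
    rw [norm_mul, norm_mul, norm_I, Complex.norm_real, Complex.norm_real,
        Real.norm_eq_abs, Real.norm_eq_abs, one_mul]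
    exact mul_le_of_le_one_left (abs_nonneg _) hMk
  have h4 := (norm_sub_le ((e * (u' t + k * I * u t) - (I * (M * w₀) + k * I * w₀))
      + I * ((M - k : ℝ) : ℂ) * w₀) (e * (u' t - k * I * u t))).trans
      (add_le_add (norm_add_le _ _) le_rfl)
  have h5 := h4.trans (add_le_add (add_le_add hP h3) hN')
  nlinarith [mul_le_mul_of_nonneg_right h5 hkpos.le]

end AirySolution

namespace AiryBasis

variable {f f' g g' : ℂ → ℂ}

theorem eq_zero_of_vertical (h : AiryBasis f f' g g') {α β : ℂ} {a b : ℝ} (hb : 0 < b)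
    (ha : a < 1 / (4 * b ^ 2)) (h1 : α * f (a + b * I) + β * g (a + b * I) = 0)
    (h2 : α * f (a - b * I) + β * g (a - b * I) = 0) : α = 0 ∧ β = 0 := by
  have hw := h.left.linear_combination h.right α β
  have hz := hw.eq_zero_of_vertical hb ha h1 h2
  have h0 : (0 : ℝ) ∈ Set.Ioo (-b) b := ⟨by linarith, hb⟩
  exact h.eq_zero_of_eq_zero (hz 0 h0) (hw.deriv_eq_zero_of_line I_ne_zero hz h0)

/-- The nonzero zeros of `g` lie on the three rays where `z ^ 3` is negative. -/
theorem cube_of_right_eq_zero (h : AiryBasis f f' g g') {z : ℂ} (hz : z ≠ 0) (hgz : g z = 0) :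
    (z ^ 3).im = 0 ∧ (z ^ 3).re < 0 := by
  set u : ℝ → ℂ := fun s => g (0 + s * z) with hu
  set u' : ℝ → ℂ := fun s => z * g' (0 + s * z) with hu'
  have hd : ∀ t, HasDerivAt u (u' t) t := fun t => h.right.hasDerivAt_line 0 z t
  have hd' : ∀ t, HasDerivAt u' (t * z ^ 3 * u t) t := fun t => by
    convert! h.right.hasDerivAt_deriv_line 0 z t using 1
    simp only [hu]
    ring
  have hu0 : u 0 = 0 := by simp [hu, h.right_zero]
  have hu1 : u 1 = 0 := by simp [hu, hgz]
  have hne : ¬ ∀ s ∈ Set.Ioo (0 : ℝ) 1, u s = 0 := by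
    intro hall
    have hm : (1 / 2 : ℝ) ∈ Set.Ioo (0 : ℝ) 1 := by constructor <;> norm_num
    have h1 := hall _ hm
    have h2 := h.right.deriv_eq_zero_of_line hz hall hm
    have := (h.eq_zero_of_eq_zero (α := 0) (β := 1) (z := 0 + (1 / 2 : ℝ) * z)
      (by simpa [hu] using h1) (by simpa using h2)).2
    exact one_ne_zero this
  have him : (z ^ 3).im = 0 := by
    by_contra hcon
    have hF : ∀ t ∈ Set.Icc (0 : ℝ) 1, HasDerivAt
        (fun t => ((u t).re * (u' t).im - (u t).im * (u' t).re) * (z ^ 3).im)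
        (t * (z ^ 3).im ^ 2 * ((u t).re ^ 2 + (u t).im ^ 2)) t := by
      intro t _
      convert! (((hd t).complex_re.mul (hd' t).complex_im).sub
        ((hd t).complex_im.mul (hd' t).complex_re)).mul_const (z ^ 3).im using 1
      simp only [mul_re, mul_im, ofReal_re, ofReal_im, zero_mul, sub_zero, add_zero]
      ring
    have hzero := eq_zero_of_hasDerivAt_nonneg_of_endpoints hF (fun t ht => by
      have := ht.1; positivity) (by simp [hu0]) (by simp [hu1])
    refine hne fun s hs => ?_
    have h1 := hzero s hs
    have h2 : (u s).re ^ 2 + (u s).im ^ 2 = 0 := by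
      rcases mul_eq_zero.1 h1 with h3 | h3
      · exact absurd h3 (by have := hs.1; positivity)
      · exact h3
    apply Complex.ext <;> simp <;> nlinarith [sq_nonneg (u s).re, sq_nonneg (u s).im]
  refine ⟨him, ?_⟩
  by_contra hcon
  push Not at hcon
  have hF : ∀ t ∈ Set.Icc (0 : ℝ) 1, HasDerivAt
      (fun t => (u t).re * (u' t).re + (u t).im * (u' t).im)
      ((u' t).re ^ 2 + (u' t).im ^ 2 + t * (z ^ 3).re * ((u t).re ^ 2 + (u t).im ^ 2)) t := by
    intro t _
    convert! ((hd t).complex_re.mul (hd' t).complex_re).add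
      ((hd t).complex_im.mul (hd' t).complex_im) using 1
    simp only [mul_re, mul_im, ofReal_re, ofReal_im, zero_mul, sub_zero, add_zero, him]
    ring
  have hzero := eq_zero_of_hasDerivAt_nonneg_of_endpoints hF (fun t ht => by
    have := ht.1; positivity) (by simp [hu0]) (by simp [hu1])
  have hu'0 : ∀ s ∈ Set.Ioo (0 : ℝ) 1, u' s = 0 := by
    intro s hs
    have h1 := hzero s hs
    have h2 : 0 ≤ s * (z ^ 3).re * ((u s).re ^ 2 + (u s).im ^ 2) := by
      have := hs.1; positivity
    apply Complex.ext <;> simp <;> nlinarith [sq_nonneg (u' s).re, sq_nonneg (u' s).im]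
  refine hne fun s hs => ?_
  have he : u' =ᶠ[nhds s] fun _ => 0 := by
    filter_upwards [isOpen_Ioo.mem_nhds hs] with r hr using hu'0 r hr
  have h1 := (hd' s).unique ((hasDerivAt_const s (0 : ℂ)).congr_of_eventuallyEq he)
  have h2 : (s : ℂ) ≠ 0 := by exact_mod_cast hs.1.ne'
  exact (mul_eq_zero.1 h1).resolve_left (mul_ne_zero h2 (pow_ne_zero 3 hz))

end AiryBasis

/-! ### The Airy equation on the positive real axis -/

/-- `p` is a real solution of the Airy equation on the line, and `p'` is its derivative. -/
structure RealAirySolution (p p' : ℝ → ℝ) : Prop where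
  hasDerivAt : ∀ x, HasDerivAt p (p' x) x
  hasDerivAt_deriv : ∀ x, HasDerivAt p' (x * p x) x

theorem le_of_hasDerivAt_nonneg {F F' : ℝ → ℝ} {x₀ x₁ : ℝ} (hx : x₀ ≤ x₁)
    (hF : ∀ x ∈ Set.Icc x₀ x₁, HasDerivAt F (F' x) x)
    (h0 : ∀ x ∈ Set.Icc x₀ x₁, 0 ≤ F' x) : F x₀ ≤ F x₁ := by
  refine monotoneOn_of_deriv_nonneg (convex_Icc x₀ x₁)
    (fun x hx => (hF x hx).continuousAt.continuousWithinAt)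
    (fun x hx => (hF x (interior_subset hx)).differentiableAt.differentiableWithinAt)
    (fun x hx => ?_) (Set.left_mem_Icc.2 hx) (Set.right_mem_Icc.2 hx) hx
  rw [(hF x (interior_subset hx)).deriv]
  exact h0 x (interior_subset hx)

theorem nonneg_of_forall_neg_div_le {a K y₀ : ℝ} (h : ∀ y, y₀ ≤ y → -(K / y) ≤ a) : 0 ≤ a := by
  have ht : Filter.Tendsto (fun y : ℝ => -(K / y)) Filter.atTop (nhds (-0)) :=
    (Filter.tendsto_id.const_div_atTop K).neg
  rw [neg_zero] at ht
  exact le_of_tendsto ht (Filter.eventually_atTop.2 ⟨y₀, h⟩)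

namespace RealAirySolution

variable {p p' q q' : ℝ → ℝ}

theorem sub_const_mul (hp : RealAirySolution p p') (hq : RealAirySolution q q') (c : ℝ) :
    RealAirySolution (fun x => p x - c * q x) (fun x => p' x - c * q' x) where
  hasDerivAt x := (hp.hasDerivAt x).sub ((hq.hasDerivAt x).const_mul c)
  hasDerivAt_deriv x := by
    convert! (hp.hasDerivAt_deriv x).sub ((hq.hasDerivAt_deriv x).const_mul c) using 1
    ring

theorem continuous_deriv (hp : RealAirySolution p p') : Continuous p' :=
  continuous_iff_continuousAt.2 fun x => (hp.hasDerivAt_deriv x).continuousAt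

theorem hasDerivAt_mul_deriv (hp : RealAirySolution p p') (x : ℝ) :
    HasDerivAt (fun x => p x * p' x) (p' x ^ 2 + x * p x ^ 2) x := by
  convert! (hp.hasDerivAt x).mul (hp.hasDerivAt_deriv x) using 1
  ring

theorem hasDerivAt_sq_sub (hp : RealAirySolution p p') (x : ℝ) :
    HasDerivAt (fun x => p' x ^ 2 - x * p x ^ 2) (-p x ^ 2) x := by
  convert! ((hp.hasDerivAt_deriv x).pow 2).sub
    ((hasDerivAt_id x).mul ((hp.hasDerivAt x).pow 2)) using 1
  simp
  ring

/-- A solution which is nonnegative and increasing at some point keeps growing. -/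
theorem growth {x₀ x : ℝ} (hp : RealAirySolution p p') (hx₀ : 0 ≤ x₀) (h0 : 0 ≤ p x₀)
    (h1 : 0 < p' x₀) (hx : x₀ ≤ x) : p' x₀ ≤ p' x ∧ p x₀ + p' x₀ * (x - x₀) ≤ p x := by
  have hmul : ∀ s, x₀ ≤ s → 0 ≤ p s * p' s := fun s hs =>
    (mul_nonneg h0 h1.le).trans (le_of_hasDerivAt_nonneg hs
      (fun u _ => hp.hasDerivAt_mul_deriv u) fun u hu => by
        have : 0 ≤ u := hx₀.trans hu.1
        positivity)
  have hsq : ∀ s, x₀ ≤ s → p' x₀ ^ 2 ≤ p' s ^ 2 := fun s hs =>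
    le_of_hasDerivAt_nonneg (F := fun u => p' u ^ 2) hs
      (fun u _ => (hp.hasDerivAt_deriv u).pow 2) fun u hu => by
        have h2 := mul_nonneg (hx₀.trans hu.1) (hmul u hu.1)
        simp
        nlinarith
  have hpos : ∀ s, x₀ ≤ s → p' x₀ ≤ p' s := by
    intro s hs
    have hs0 : 0 < p' s := by
      by_contra hneg
      obtain ⟨u, hu, hu0⟩ := intermediate_value_Icc' hs hp.continuous_deriv.continuousOn
        ⟨not_lt.1 hneg, h1.le⟩
      have := hsq u hu.1
      rw [hu0] at this
      nlinarith
    exact (sq_le_sq₀ h1.le hs0.le).1 (hsq s hs)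
  refine ⟨hpos x hx, ?_⟩
  have := le_of_hasDerivAt_nonneg (F := fun u => p u - p' x₀ * u) hx
    (fun u _ => (hp.hasDerivAt u).sub ((hasDerivAt_id u).const_mul (p' x₀)))
    fun u hu => by simpa using hpos u hu.1
  linarith

/-- Logarithmic derivative of the growing solution. -/
theorem abs_log_deriv_sub_sqrt_le {x : ℝ} (hq : RealAirySolution q q') (h0 : q 0 = 0)
    (h1 : q' 0 = 1) (hx : 1 ≤ x) : |q' x / q x - √x| ≤ 1 := by
  have hg : ∀ s, 0 ≤ s → 1 ≤ q' s ∧ s ≤ q s := fun s hs => by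
    simpa [h0, h1] using hq.growth le_rfl h0.ge (h1 ▸ one_pos) hs
  have hx0 : 0 ≤ x := zero_le_one.trans hx
  obtain ⟨hx1, hx2⟩ := hg x hx0
  have hqx : 1 ≤ q x := hx.trans hx2
  have hup : q' x ^ 2 - x * q x ^ 2 ≤ 1 := by
    have := le_of_hasDerivAt_nonneg (F := fun u => -(q' u ^ 2 - u * q u ^ 2)) hx0
      (fun u _ => (hq.hasDerivAt_sq_sub u).neg) fun u _ => by
        rw [neg_neg]; positivity
    simp only [h0, h1] at this
    linarith
  have hq1 : q 1 ≤ q x := by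
    have := (hq.growth zero_le_one (zero_le_one.trans (hg 1 zero_le_one).2)
      (one_pos.trans_le (hg 1 zero_le_one).1) hx).2
    nlinarith [(hg 1 zero_le_one).1]
  have hlow : -q x ^ 2 ≤ q' x ^ 2 - x * q x ^ 2 + q x * q' x := by
    have := le_of_hasDerivAt_nonneg (F := fun u => q' u ^ 2 - u * q u ^ 2 + q u * q' u) hx
      (fun u _ => (hq.hasDerivAt_sq_sub u).add (hq.hasDerivAt_mul_deriv u)) fun u hu => by
        nlinarith [sq_nonneg (q' u), mul_nonneg (sub_nonneg.2 hu.1) (sq_nonneg (q u))]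
    simp only [one_mul] at this
    nlinarith [(hg 1 zero_le_one).1, (hg 1 zero_le_one).2, sq_nonneg (q' 1)]
  have hs1 : 1 ≤ √x := Real.one_le_sqrt.2 hx
  have hsq : √x ^ 2 = x := Real.sq_sqrt hx0
  set m := q' x / q x with hm
  have hmq : q' x = m * q x := by rw [hm]; field_simp
  have hm0 : 0 ≤ m := div_nonneg (by linarith) (by linarith)
  rw [hmq] at hup hlow
  have h2 : m ^ 2 ≤ x + 1 := by
    have hq2 : 1 ≤ q x ^ 2 := by nlinarith
    by_contra hc
    nlinarith
  have h3 : x - 1 ≤ m ^ 2 + m := by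
    have hq2 : 0 < q x ^ 2 := by positivity
    by_contra hc
    nlinarith
  rw [abs_le]
  constructor
  · by_contra hc
    nlinarith
  · by_contra hc
    nlinarith

end RealAirySolution

/-- A positive decreasing real solution on the positive axis. -/
structure RecessiveSolution (p p' : ℝ → ℝ) : Prop extends RealAirySolution p p' where
  pos : ∀ x, 0 < x → 0 < p x
  deriv_neg : ∀ x, 0 < x → p' x < 0

namespace RealAirySolution

variable {p p' q q' : ℝ → ℝ}

theorem exists_recessive (hp : RealAirySolution p p') (hq : RealAirySolution q q')
    (hp0 : p 0 = 1) (hp1 : p' 0 = 0) (hq0 : q 0 = 0) (hq1 : q' 0 = 1)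
    (hW : ∀ x, p x * q' x - p' x * q x = 1) :
    ∃ c, RecessiveSolution (fun x => p x - c * q x) (fun x => p' x - c * q' x) := by
  have hg : ∀ s, 0 ≤ s → 1 ≤ q' s ∧ s ≤ q s := fun s hs => by
    simpa [hq0, hq1] using hq.growth le_rfl hq0.ge (hq1 ▸ one_pos) hs
  have hqpos : ∀ s, 0 < s → 0 < q s := fun s hs => hs.trans_le (hg s hs.le).2
  have hanti : StrictAntiOn (fun x => p x / q x) (Set.Ioi 0) := by
    have hd : ∀ x ∈ Set.Ioi (0 : ℝ), HasDerivAt (fun x => p x / q x) (-1 / q x ^ 2) x := by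
      intro x hx
      convert! (hp.hasDerivAt x).div (hq.hasDerivAt x) (hqpos x hx).ne' using 1
      rw [← hW x]
      ring
    refine strictAntiOn_of_deriv_neg (convex_Ioi 0)
      (fun x hx => (hd x hx).continuousAt.continuousWithinAt) fun x hx => ?_
    rw [interior_Ioi] at hx
    rw [(hd x hx).deriv]
    have := hqpos x hx
    rw [neg_div]
    exact neg_neg_of_pos (by positivity)
  have hbdd : BddBelow ((fun x => p x / q x) '' Set.Ioi 0) := by
    refine ⟨-1, ?_⟩
    rintro _ ⟨x, hx, rfl⟩
    have hx : 0 < x := hx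
    have := ((hp.sub_const_mul hq (-1)).growth le_rfl (by simp [hp0, hq0]) (by simp [hp1, hq1])
      hx.le).2
    simp only [hp0, hq0, hp1, hq1] at this
    simp only
    rw [le_div_iff₀ (hqpos x hx)]
    linarith
  set c := sInf ((fun x => p x / q x) '' Set.Ioi 0) with hc
  have hcle : ∀ x, 0 < x → c ≤ p x / q x := fun x hx => csInf_le hbdd ⟨x, hx, rfl⟩
  have hv := hp.sub_const_mul hq c
  have hvpos : ∀ x, 0 < x → 0 < p x - c * q x := by
    intro x hx
    have h1 : c < p x / q x := (hcle (x + 1) (by linarith)).trans_lt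
      (hanti (Set.mem_Ioi.2 hx) (Set.mem_Ioi.2 (by linarith : 0 < x + 1)) (by linarith))
    rw [lt_div_iff₀ (hqpos x hx)] at h1
    linarith
  refine ⟨c, ⟨hv, hvpos, ?_⟩⟩
  intro x₀ hx₀
  by_contra hneg
  push Not at hneg
  obtain ⟨x₁, hx₁, hx₁'⟩ : ∃ x₁, x₀ ≤ x₁ ∧ 0 < p' x₁ - c * q' x₁ := by
    have hmono : StrictMonoOn (fun x => p' x - c * q' x) (Set.Icc x₀ (x₀ + 1)) := by
      refine strictMonoOn_of_deriv_pos (convex_Icc _ _) (hv.continuous_deriv.continuousOn)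
        fun x hx => ?_
      rw [interior_Icc] at hx
      rw [(hv.hasDerivAt_deriv x).deriv]
      exact mul_pos (hx₀.trans hx.1) (hvpos x (hx₀.trans hx.1))
    exact ⟨x₀ + 1, by linarith, hneg.trans_lt (hmono (Set.left_mem_Icc.2 (by linarith))
      (Set.right_mem_Icc.2 (by linarith)) (by linarith))⟩
  have hx₁0 : 0 < x₁ := hx₀.trans_le hx₁
  have hv₁ := hvpos x₁ hx₁0
  have hq₁ := hqpos x₁ hx₁0
  have hq₁' : 0 < q' x₁ := one_pos.trans_le (hg x₁ hx₁0.le).1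
  obtain ⟨κ, hκ, hκ1, hκ2⟩ : ∃ κ, 0 < κ ∧ κ * q x₁ ≤ p x₁ - c * q x₁ ∧
      κ * q' x₁ < p' x₁ - c * q' x₁ := by
    refine ⟨min ((p x₁ - c * q x₁) / q x₁) ((p' x₁ - c * q' x₁) / q' x₁ / 2), by positivity, ?_, ?_⟩
    · rw [← le_div_iff₀ hq₁]; exact min_le_left _ _
    · rw [← lt_div_iff₀ hq₁']
      exact (min_le_right _ _).trans_lt (half_lt_self (by positivity))
  have hge : ∀ x, x₁ ≤ x → c + κ ≤ p x / q x := by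
    intro x hx
    have h1 := ((hv.sub_const_mul hq κ).growth hx₁0.le (by linarith) (by linarith) hx).2
    rw [le_div_iff₀ (hqpos x (hx₁0.trans_le hx))]
    have h2 : 0 ≤ (p' x₁ - c * q' x₁ - κ * q' x₁) * (x - x₁) :=
      mul_nonneg (by linarith) (by linarith)
    linarith
  have : c + κ ≤ c := by
    refine le_csInf ⟨_, 1, Set.mem_Ioi.2 one_pos, rfl⟩ ?_
    rintro _ ⟨x, hx, rfl⟩
    rcases le_total x₁ x with h | h
    · exact hge x h
    · exact (hge x₁ le_rfl).trans (hanti.antitoneOn hx (Set.mem_Ioi.2 hx₁0) h)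
  linarith

end RealAirySolution

namespace RecessiveSolution

variable {p p' : ℝ → ℝ}

theorem antitone (h : RecessiveSolution p p') {x y : ℝ} (hx : 0 < x) (hxy : x ≤ y) :
    p y ≤ p x := by
  have := le_of_hasDerivAt_nonneg (F := fun u => -p u) hxy (fun u _ => (h.hasDerivAt u).neg)
    fun u hu => by linarith [h.deriv_neg u (hx.trans_le hu.1)]
  simpa using this

theorem deriv_mono (h : RecessiveSolution p p') {x y : ℝ} (hx : 0 < x) (hxy : x ≤ y) :
    p' x ≤ p' y :=
  le_of_hasDerivAt_nonneg hxy (fun u _ => h.hasDerivAt_deriv u)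
    fun u hu => mul_nonneg (hx.le.trans hu.1) (h.pos u (hx.trans_le hu.1)).le

theorem exists_decay (h : RecessiveSolution p p') :
    ∃ C, 0 < C ∧ ∀ x, 3 ≤ x → p x ≤ C / x ∧ -p' x ≤ C / x := by
  have hN : 0 < -p' 1 := by linarith [h.deriv_neg 1 one_pos]
  have hstep : ∀ x, 1 ≤ x → x * p (x + 1) ≤ -p' 1 := by
    intro x hx
    have h1 := le_of_hasDerivAt_nonneg (F := fun u => p' u - x * p (x + 1) * u)
      (by linarith : x ≤ x + 1)
      (fun u _ => (h.hasDerivAt_deriv u).sub ((hasDerivAt_id u).const_mul _)) fun u hu => by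
        have h2 := h.antitone (by linarith [hu.1]) hu.2
        have h3 := h.pos (x + 1) (by linarith)
        nlinarith [hu.1]
    have h2 := h.deriv_neg (x + 1) (by linarith)
    have h3 := h.deriv_mono one_pos hx
    linarith
  have hp : ∀ x, 2 ≤ x → p x ≤ -p' 1 / (x - 1) := by
    intro x hx
    rw [le_div_iff₀ (by linarith)]
    have := hstep (x - 1) (by linarith)
    rw [sub_add_cancel] at this
    linarith
  refine ⟨3 * -p' 1, by linarith, fun x hx => ⟨?_, ?_⟩⟩
  · refine (hp x (by linarith)).trans ?_
    rw [div_le_div_iff₀ (by linarith) (by linarith)]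
    nlinarith
  · have h1 := le_of_hasDerivAt_nonneg (F := fun u => p' x * u - p u) (by linarith : x - 1 ≤ x)
      (fun u _ => ((hasDerivAt_id u).const_mul (p' x)).sub (h.hasDerivAt u)) fun u hu => by
        have := h.deriv_mono (by linarith [hu.1]) hu.2
        simpa using this
    have h2 := h.pos x (by linarith)
    have h3 : -p' x ≤ p (x - 1) := by linarith
    refine (h3.trans (hp (x - 1) (by linarith))).trans ?_
    rw [div_le_div_iff₀ (by linarith) (by linarith)]
    nlinarith

/-- Logarithmic derivative of the recessive solution. -/
theorem abs_log_deriv_add_sqrt_le (h : RecessiveSolution p p') {x : ℝ} (hx : 1 ≤ x) :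
    |p' x / p x + √x| ≤ 1 := by
  obtain ⟨C, hC, hdec⟩ := h.exists_decay
  have hQ : ∀ s, 1 ≤ s → 0 ≤ p' s ^ 2 - s * p s ^ 2 := by
    intro s hs
    refine nonneg_of_forall_neg_div_le (y₀ := max s 3) (K := C ^ 2) fun y hy => ?_
    have hy3 : 3 ≤ y := (le_max_right _ _).trans hy
    have h1 := le_of_hasDerivAt_nonneg (F := fun u => -(p' u ^ 2 - u * p u ^ 2))
      ((le_max_left _ _).trans hy) (fun u _ => (h.hasDerivAt_sq_sub u).neg) fun u _ => by
        rw [neg_neg]; positivity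
    have h2 : y * p y ^ 2 ≤ C ^ 2 / y := by
      have h3 := pow_le_pow_left₀ (h.pos y (by linarith)).le (hdec y hy3).1 2
      calc y * p y ^ 2 ≤ y * (C / y) ^ 2 := by gcongr
        _ = C ^ 2 / y := by field_simp
    nlinarith [sq_nonneg (p' y)]
  have hx0 : 0 < x := by linarith
  have hs1 : 1 ≤ √x := Real.one_le_sqrt.2 hx
  have hroot : ∀ s, 1 ≤ s → √s * p s ≤ -p' s := by
    intro s hs
    have h1 := h.pos s (by linarith)
    have h2 := h.deriv_neg s (by linarith)
    refine (sq_le_sq₀ (by positivity) (by linarith)).1 ?_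
    rw [mul_pow, Real.sq_sqrt (by linarith)]
    linarith [hQ s hs]
  have hR : p' x ^ 2 - x * p x ^ 2 ≤ p x ^ 2 := by
    have : 0 ≤ p x ^ 2 - (p' x ^ 2 - x * p x ^ 2) := by
      refine nonneg_of_forall_neg_div_le (y₀ := max x 3) (K := C ^ 2) fun y hy => ?_
      have hy3 : 3 ≤ y := (le_max_right _ _).trans hy
      have h1 := le_of_hasDerivAt_nonneg (F := fun u => p' u ^ 2 - u * p u ^ 2 - p u ^ 2)
        ((le_max_left _ _).trans hy)
        (fun u _ => (h.hasDerivAt_sq_sub u).sub ((h.hasDerivAt u).pow 2)) fun u hu => by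
          have h2 := hroot u (hx.trans hu.1)
          have h3 := h.pos u (hx0.trans_le hu.1)
          have h4 : 1 ≤ √u := Real.one_le_sqrt.2 (hx.trans hu.1)
          have h5 : p u ≤ -p' u := by nlinarith
          simp
          nlinarith
      have h2 : p' y ^ 2 ≤ C ^ 2 / y := by
        have h4 := h.deriv_neg y (by linarith)
        have h3 := pow_le_pow_left₀ (by linarith) (hdec y hy3).2 2
        calc p' y ^ 2 = (-p' y) ^ 2 := by ring
          _ ≤ (C / y) ^ 2 := h3
          _ = C ^ 2 / y / y := by field_simp
          _ ≤ C ^ 2 / y := div_le_self (by positivity) (by linarith)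
      have h5 := h.pos y (by linarith)
      nlinarith [mul_pos (by linarith : 0 < y) (pow_pos h5 2), pow_pos h5 2]
    linarith
  have hpx := h.pos x hx0
  have h1 := hroot x hx
  have hsq : √x ^ 2 = x := Real.sq_sqrt hx0.le
  set n := p' x / p x with hn
  have hnp : p' x = n * p x := by rw [hn]; field_simp
  rw [hnp] at h1 hR
  have h2 : √x ≤ -n := by
    by_contra hc
    nlinarith
  have h3 : n ^ 2 ≤ x + 1 := by
    have : 0 < p x ^ 2 := by positivity
    by_contra hc
    nlinarith
  rw [abs_le]
  constructor
  · by_contra hc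
    nlinarith
  · linarith

end RecessiveSolution

/-! ### The recessive solution in the complex plane -/

theorem AirySolution.re_ofReal {w w' : ℂ → ℂ} (hw : AirySolution w w') :
    RealAirySolution (fun x : ℝ => (w x).re) (fun x : ℝ => (w' x).re) where
  hasDerivAt x := (hw.hasDerivAt x).comp_ofReal.complex_re
  hasDerivAt_deriv x := by
    simpa using (hw.hasDerivAt_deriv x).comp_ofReal.complex_re

namespace AiryBasis

variable {f f' g g' : ℂ → ℂ} {c : ℝ}

theorem ofReal_re (h : AiryBasis f f' g g') (x : ℝ) :
    f x = (f x).re ∧ f' x = (f' x).re ∧ g x = (g x).re ∧ g' x = (g' x).re := by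
  have h1 := h.conj_left x
  have h2 := h.conj_right x
  rw [conj_ofReal] at h1 h2
  exact ⟨(conj_eq_iff_re.1 h1.1.symm).symm, (conj_eq_iff_re.1 h1.2.symm).symm,
    (conj_eq_iff_re.1 h2.1.symm).symm, (conj_eq_iff_re.1 h2.2.symm).symm⟩

theorem exists_recessive (h : AiryBasis f f' g g') :
    ∃ c : ℝ, RecessiveSolution (fun x : ℝ => (f x).re - c * (g x).re)
      (fun x : ℝ => (f' x).re - c * (g' x).re) := by
  refine h.left.re_ofReal.exists_recessive h.right.re_ofReal (by simp [h.left_zero])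
    (by simp [h.deriv_left_zero]) (by simp [h.right_zero]) (by simp [h.deriv_right_zero])
    fun x => ?_
  have h1 := h.wronskian x
  rw [(h.ofReal_re x).1, (h.ofReal_re x).2.1, (h.ofReal_re x).2.2.1, (h.ofReal_re x).2.2.2] at h1
  exact_mod_cast h1

theorem sub_const_mul (h : AiryBasis f f' g g') (c : ℝ) :
    AirySolution (fun z => f z - c * g z) (fun z => f' z - c * g' z) := by
  convert! h.left.linear_combination h.right 1 (-c) using 2 <;> ring

theorem sub_const_mul_ofReal (h : AiryBasis f f' g g') (c x : ℝ) :
    f x - c * g x = ((f x).re - c * (g x).re : ℝ) ∧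
      f' x - c * g' x = ((f' x).re - c * (g' x).re : ℝ) := by
  constructor
  · push_cast
    rw [← (h.ofReal_re x).1, ← (h.ofReal_re x).2.2.1]
  · push_cast
    rw [← (h.ofReal_re x).2.1, ← (h.ofReal_re x).2.2.2]

theorem recessive_ne_zero_of_im_pos (h : AiryBasis f f' g g')
    (hc : RecessiveSolution (fun x : ℝ => (f x).re - c * (g x).re)
      (fun x : ℝ => (f' x).re - c * (g' x).re)) {x₀ t : ℝ} (ht : 0 < t) :
    f (x₀ + t * I) - c * g (x₀ + t * I) ≠ 0 := by
  intro h0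
  have hv := h.sub_const_mul c
  set v : ℂ → ℂ := fun z => f z - c * g z with hvdef
  set v' : ℂ → ℂ := fun z => f' z - c * g' z with hvdef'
  obtain ⟨C, hC, hdec⟩ := hc.exists_decay
  set J : ℝ → ℝ := fun x => (v' (t * I + x * 1) * starRingEnd ℂ (v (t * I + x * 1))).im with hJ
  have hJd : ∀ x : ℝ, HasDerivAt J (t * ‖v (t * I + x * 1)‖ ^ 2) x := by
    intro x
    have h1 := hv.hasDerivAt_line (t * I) 1 x
    have h2 := hv.hasDerivAt_deriv_line (t * I) 1 x
    simp only [one_mul] at h1 h2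
    have h3 := (h2.mul h1.star).complex_im
    convert! h3 using 1
    rw [← Complex.normSq_eq_norm_sq, Complex.normSq_apply]
    simp
    ring
  have hbound : ∀ y, 3 ≤ y → |J y| ≤ 2 * C ^ 2 * Real.exp (t ^ 2) / y := by
    intro y hy
    have hy0 : 0 < y := by linarith
    have hsq : (((√y : ℝ) : ℂ)) ^ 2 = y := by rw [← ofReal_pow, Real.sq_sqrt hy0.le]
    have hn : ‖((√y : ℝ) : ℂ)‖ = √y := by
      rw [Complex.norm_real, Real.norm_eq_abs, abs_of_nonneg (Real.sqrt_nonneg y)]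
    have he := energy_le (y := fun s : ℝ => v (y + s * I)) (y' := fun s : ℝ => I * v' (y + s * I))
      (r := fun s => s * I) (κ := ((√y : ℝ) : ℂ)) (ρ := t) (x₀ := 0) (x₁ := t)
      (by simpa using (Real.sqrt_pos.2 hy0).ne') ht.le (fun s => hv.hasDerivAt_line y I s)
      (fun s => by
        convert! hv.hasDerivAt_deriv_line (y : ℂ) I s using 1
        rw [hsq, I_sq]; ring)
      (fun s hs => by
        rw [norm_mul, norm_I, mul_one, Complex.norm_real, Real.norm_eq_abs, abs_of_nonneg hs.1]
        exact hs.2)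
    have hpy := hc.pos y hy0
    have hpy' := hc.deriv_neg y hy0
    obtain ⟨hd1, hd2⟩ := hdec y hy
    have hv0 : v y = ((f y).re - c * (g y).re : ℝ) := (h.sub_const_mul_ofReal c y).1
    have hv0' : v' y = ((f' y).re - c * (g' y).re : ℝ) := (h.sub_const_mul_ofReal c y).2
    simp only [ofReal_zero, zero_mul, add_zero, norm_mul, norm_I, one_mul, hn, ofReal_im, abs_zero,
      mul_zero, zero_add, sub_zero, Real.sq_sqrt hy0.le, hv0, hv0', Complex.norm_real,
      Real.norm_eq_abs, sq_abs] at he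
    have h1 : ((f' y).re - c * (g' y).re) ^ 2 + y * ((f y).re - c * (g y).re) ^ 2
        ≤ 2 * C ^ 2 / y := by
      have h2 := pow_le_pow_left₀ hpy.le hd1 2
      have h3 := pow_le_pow_left₀ (by linarith) hd2 2
      rw [neg_sq] at h3
      calc _ ≤ (C / y) ^ 2 + y * (C / y) ^ 2 := by gcongr
        _ = C ^ 2 / y / y + C ^ 2 / y := by field_simp
        _ ≤ C ^ 2 / y + C ^ 2 / y := by
          gcongr
          exact div_le_self (by positivity) (by linarith)
        _ = _ := by ring
    have h4 : Real.exp (t / √y * t) ≤ Real.exp (t ^ 2) := by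
      apply Real.exp_le_exp.2
      have : 1 ≤ √y := Real.one_le_sqrt.2 (by linarith)
      have : t / √y ≤ t := div_le_self ht.le this
      nlinarith
    have h5 : |J y| ≤ ‖v' (y + t * I)‖ ^ 2 + y * ‖v (y + t * I)‖ ^ 2 := by
      have : t * I + (y : ℂ) * 1 = y + t * I := by ring
      simp only [hJ, this]
      refine (Complex.abs_im_le_norm _).trans ?_
      rw [norm_mul, Complex.norm_conj]
      nlinarith [sq_nonneg (‖v' (y + t * I)‖ - ‖v (y + t * I)‖), sq_nonneg (‖v (y + t * I)‖),
        sq_nonneg (‖v' (y + t * I)‖)]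
    refine h5.trans (he.trans ?_)
    calc _ ≤ 2 * C ^ 2 / y * Real.exp (t ^ 2) := by gcongr
      _ = _ := by ring
  have hmono : ∀ x y, x ≤ y → J x ≤ J y := fun x y hxy =>
    le_of_hasDerivAt_nonneg hxy (fun u _ => hJd u) fun u _ => by positivity
  have hJ0 : J x₀ = 0 := by
    have : t * I + (x₀ : ℂ) * 1 = x₀ + t * I := by ring
    simp only [hJ, this]
    rw [show v (x₀ + t * I) = 0 from h0]; simp
  have hJ1 : J (x₀ + 1) = 0 := by
    refine le_antisymm ?_ (hJ0 ▸ hmono x₀ (x₀ + 1) (by linarith))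
    have : 0 ≤ -J (x₀ + 1) :=
      nonneg_of_forall_neg_div_le (y₀ := max (x₀ + 1) 3) fun y hy => by
        have h1 := hmono _ _ ((le_max_left _ _).trans hy)
        have h2 := hbound y ((le_max_right _ _).trans hy)
        have h3 := le_abs_self (J y)
        exact (neg_le_neg h2).trans (by linarith)
    linarith
  have hz := eq_zero_of_hasDerivAt_nonneg_of_endpoints (fun u _ => hJd u)
    (fun u _ => by positivity) hJ0 hJ1
  have hz' : ∀ s ∈ Set.Ioo x₀ (x₀ + 1), v (t * I + s * 1) = 0 := fun s hs => by
    simpa [ht.ne'] using hz s hs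
  have hm : x₀ + 1 / 2 ∈ Set.Ioo x₀ (x₀ + 1) := by constructor <;> linarith
  have hd0 := hv.deriv_eq_zero_of_line one_ne_zero hz' hm
  have := h.eq_zero_of_eq_zero (α := 1) (β := -c) (by linear_combination hz' _ hm)
    (by linear_combination hd0)
  exact one_ne_zero this.1

theorem recessive_ne_zero (h : AiryBasis f f' g g')
    (hc : RecessiveSolution (fun x : ℝ => (f x).re - c * (g x).re)
      (fun x : ℝ => (f' x).re - c * (g' x).re)) {z : ℂ} (hz : 0 < z.re) :
    f z - c * g z ≠ 0 := by
  rcases lt_trichotomy 0 z.im with hi | hi | hi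
  · have := h.recessive_ne_zero_of_im_pos hc (x₀ := z.re) hi
    rwa [re_add_im] at this
  · have hz' : z = (z.re : ℂ) := by apply Complex.ext <;> simp [← hi]
    rw [hz', (h.sub_const_mul_ofReal c z.re).1]
    exact_mod_cast (hc.pos _ hz).ne'
  · have := h.recessive_ne_zero_of_im_pos hc (x₀ := z.re) (neg_pos.2 hi)
    have hconj : (z.re : ℂ) + ((-z.im : ℝ) : ℂ) * I = starRingEnd ℂ z := by
      apply Complex.ext <;> simp
    rw [hconj, (h.conj_left z).1, (h.conj_right z).1] at this
    intro h0
    apply this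
    have := congrArg (starRingEnd ℂ) h0
    simpa using this

/-- The zeros of `g` in the right half-plane lie on the two rays `arg z = ±π/3`. -/
theorem right_ne_zero (h : AiryBasis f f' g g') {B : ℝ}
    (hB : ∀ r ∈ rayZeroModuli g, B ≤ √3 / 2 * r) {z : ℂ} (hz : 0 < z.re) (hzi : |z.im| < B) :
    g z ≠ 0 := by
  intro h0
  have hz0 : z ≠ 0 := by rintro rfl; simp at hz
  obtain ⟨h1, h2⟩ := h.cube_of_right_eq_zero hz0 h0
  simp only [pow_succ, pow_zero, one_mul, mul_im, mul_re] at h1 h2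
  have hs3 : √3 ^ 2 = 3 := Real.sq_sqrt (by norm_num)
  have hs30 : 0 < √3 := Real.sqrt_pos.2 (by norm_num)
  have hray : ∀ s : ℂ, s.re = z.re → s.im = √3 * z.re →
      ((2 * z.re : ℝ) : ℂ) * Complex.exp ((π / 3 : ℝ) * Complex.I) = s := by
    intro s hs1 hs2
    rw [Complex.exp_mul_I, ← ofReal_cos, ← ofReal_sin, Real.cos_pi_div_three,
      Real.sin_pi_div_three]
    apply Complex.ext
    · simp [hs1]
      ring
    · simp [hs2]
      ring
  have hy : z.im ≠ 0 := by
    intro hy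
    rw [hy] at h2
    nlinarith [pow_pos hz 3]
  have hcases : z.im = √3 * z.re ∨ z.im = -(√3 * z.re) := by
    apply sq_eq_sq_iff_eq_or_eq_neg.1
    have : z.im * (3 * z.re ^ 2 - z.im ^ 2) = 0 := by linarith
    rcases mul_eq_zero.1 this with h3 | h3
    · exact absurd h3 hy
    · rw [mul_pow, hs3]; linarith
  have hmem : 2 * z.re ∈ rayZeroModuli g := by
    refine ⟨by linarith, ?_⟩
    rcases hcases with h3 | h3
    · rw [hray z rfl h3, h0]
    · rw [hray (starRingEnd ℂ z) (by simp) (by simp [h3]), (h.conj_right z).1, h0, map_zero]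
  have h4 := hB _ hmem
  have h5 : |z.im| = √3 * z.re := by
    have : 0 < √3 * z.re := by positivity
    rcases hcases with h3 | h3 <;> rw [h3]
    · exact abs_of_pos this
    · rw [abs_neg, abs_of_pos this]
  linarith

end AiryBasis

/-! ### Continuous arguments -/

theorem abs_lt_pi_div_two_of_cos_pos {φ : ℝ → ℝ} {s t : ℝ}
    (hφ : ContinuousOn φ (Set.uIcc s t)) (h0 : φ s = 0)
    (hcos : ∀ u ∈ Set.uIcc s t, 0 < Real.cos (φ u)) : |φ t| < π / 2 := by
  by_contra hc
  have hivt := intermediate_value_uIcc hφ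
  rw [h0] at hivt
  rcases le_abs.1 (not_lt.1 hc) with h | h
  · obtain ⟨u, hu, hu'⟩ := hivt (Set.mem_uIcc.2 (Or.inl ⟨by positivity, h⟩) : π / 2 ∈ _)
    have := hcos u hu
    rw [hu', Real.cos_pi_div_two] at this
    exact this.false
  · obtain ⟨u, hu, hu'⟩ := hivt (Set.mem_uIcc.2 (Or.inr ⟨by linarith, by
      have := Real.pi_pos; linarith⟩) : -(π / 2) ∈ _)
    have := hcos u hu
    rw [hu', Real.cos_neg, Real.cos_pi_div_two] at this
    exact this.false

/-- A continuous argument, vanishing on the positive axis, of a function without zeros on a convex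
open set which is positive on the positive axis. -/
theorem exists_continuousOn_arg {S : Set ℂ} {q : ℂ → ℂ} (hSc : Convex ℝ S) (hSo : IsOpen S)
    (hS : ∀ x : ℝ, 0 < x → (x : ℂ) ∈ S) (hq : ContinuousOn q S) (hq0 : ∀ z ∈ S, q z ≠ 0)
    (hpos : ∀ x : ℝ, 0 < x → ∃ r : ℝ, 0 < r ∧ q x = r) :
    ∃ Ψ : ℂ → ℝ, ContinuousOn Ψ S ∧ (∀ x : ℝ, 0 < x → Ψ x = 0) ∧
      ∀ z ∈ S, q z = ‖q z‖ * Complex.exp (Ψ z * I) := by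
  have h1S : (1 : ℂ) ∈ S := by simpa using hS 1 one_pos
  have hsc : IsSimplyConnected S := by
    have := hSc.contractibleSpace ⟨1, h1S⟩
    exact (inferInstance : SimplyConnectedSpace S)
  obtain ⟨L, hLc, hL⟩ := Complex.exists_continuousOn_eqOn_exp_comp hsc hSo hq
    (by rintro ⟨z, hz, h⟩; exact hq0 z hz h)
  have hpolar : ∀ z ∈ S, q z = ‖q z‖ * Complex.exp ((L z).im * I) := by
    intro z hz
    have h1 : Complex.exp (L z) = q z := hL hz
    rw [← h1, Complex.norm_exp, ofReal_exp, ← Complex.exp_add, re_add_im]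
  have hone : ∀ x : ℝ, 0 < x → Complex.exp ((L x).im * I) = 1 := by
    intro x hx
    obtain ⟨r, hr, hqr⟩ := hpos x hx
    have h1 := hpolar x (hS x hx)
    rw [hqr, Complex.norm_real, Real.norm_eq_abs, abs_of_pos hr] at h1
    have hr' : (r : ℂ) ≠ 0 := by exact_mod_cast hr.ne'
    exact mul_left_cancel₀ hr' (by rw [← h1, mul_one])
  have hexp : ∀ z, Complex.exp (((L z).im - (L (1 : ℝ)).im : ℝ) * I)
      = Complex.exp ((L z).im * I) := by
    intro z
    rw [ofReal_sub, sub_mul, Complex.exp_sub, hone 1 one_pos, div_one]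
  refine ⟨fun z => (L z).im - (L (1 : ℝ)).im,
    (Complex.continuous_im.comp_continuousOn hLc).sub continuousOn_const, ?_, ?_⟩
  · intro x hx
    have hco : ∀ u : ℝ, 0 < u → Real.cos ((L u).im - (L (1 : ℝ)).im) = 1 ∧
        Real.sin ((L u).im - (L (1 : ℝ)).im) = 0 := by
      intro u hu
      have h1 := hexp u
      rw [hone u hu] at h1
      have h2 := congrArg Complex.re h1
      have h3 := congrArg Complex.im h1
      rw [Complex.exp_ofReal_mul_I_re] at h2
      rw [Complex.exp_ofReal_mul_I_im] at h3
      exact ⟨by simpa using h2, by simpa using h3⟩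
    have hup : ∀ u ∈ Set.uIcc 1 x, 0 < u := fun u hu =>
      (lt_min one_pos hx).trans_le hu.1
    have habs := abs_lt_pi_div_two_of_cos_pos (φ := fun u : ℝ => (L u).im - (L (1 : ℝ)).im)
      (s := 1) (t := x)
      (((Complex.continuous_im.comp_continuousOn hLc).comp Complex.continuous_ofReal.continuousOn
        fun u hu => hS u (hup u hu)).sub continuousOn_const) (sub_self _)
      fun u hu => by rw [(hco u (hup u hu)).1]; exact one_pos
    rw [abs_lt] at habs
    exact (Real.sin_eq_zero_iff_of_lt_of_lt (by linarith [habs.1, Real.pi_pos])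
      (by linarith [habs.2, Real.pi_pos])).1 (hco x hx).2
  · intro z hz
    rw [hexp]
    exact hpolar z hz

/-! ### The sequence of points where a growing argument hits the multiples of `π` -/

theorem exists_seq_of_arg {θ : ℝ → ℝ} {a₀ A b : ℝ} (hb : 0 < b)
    (hθ : ContinuousOn θ (Set.Ici a₀)) (h0 : θ a₀ < π)
    (hA : ∀ a, A ≤ a → |θ a - 2 * b * √a| < π / 2) :
    ∃ s : ℕ → ℝ, StrictMono s ∧ (∀ k, a₀ ≤ s k) ∧ (∀ k : ℕ, θ (s k) = (k + 1) * π) ∧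
      ∃ K, ∀ k, K ≤ k → |(k + 1) * π - 2 * b * √(s k)| < π / 2 := by
  have hpi := Real.pi_pos
  have hleast : ∀ k : ℕ, ∃ x, a₀ ≤ x ∧ θ x = (k + 1) * π ∧
      ∀ y, a₀ ≤ y → θ y = (k + 1) * π → x ≤ y := by
    intro k
    obtain ⟨M, hMa, hM⟩ : ∃ M, a₀ ≤ M ∧ (k + 1) * π ≤ θ M := by
      refine ⟨max a₀ (max A (((k + 3 / 2) * π / (2 * b)) ^ 2)), le_max_left _ _, ?_⟩
      set M := max a₀ (max A (((k + 3 / 2) * π / (2 * b)) ^ 2)) with hM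
      have h1 := abs_lt.1 (hA M ((le_max_left _ _).trans (le_max_right _ _)))
      have h2 : (k + 3 / 2) * π / (2 * b) ≤ √M :=
        Real.le_sqrt_of_sq_le ((le_max_right _ _).trans (le_max_right _ _))
      rw [div_le_iff₀ (by positivity)] at h2
      linarith [h1.1]
    have hcont := hθ.mono (Set.Icc_subset_Ici_self : Set.Icc a₀ M ⊆ _)
    obtain ⟨x₁, hx₁, hx₁'⟩ := intermediate_value_Icc hMa hcont
      (⟨h0.le.trans (by nlinarith [(Nat.cast_nonneg k : (0 : ℝ) ≤ k)]), hM⟩ :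
        (k + 1) * π ∈ Set.Icc (θ a₀) (θ M))
    have hcomp : IsCompact (Set.Icc a₀ M ∩ θ ⁻¹' {(k + 1) * π}) :=
      isCompact_Icc.of_isClosed_subset
        (hcont.preimage_isClosed_of_isClosed isClosed_Icc isClosed_singleton)
        Set.inter_subset_left
    obtain ⟨x, ⟨hx, hxe⟩, hmin⟩ := hcomp.exists_isLeast ⟨x₁, hx₁, hx₁'⟩
    refine ⟨x, hx.1, hxe, fun y hy hye => ?_⟩
    rcases le_total y M with h | h
    · exact hmin ⟨⟨hy, h⟩, hye⟩
    · exact hx.2.trans h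
  choose s hs1 hs2 hs3 using hleast
  have hmono : StrictMono s := by
    refine strictMono_nat_of_lt_succ fun k => ?_
    have hk : (0 : ℝ) ≤ k := Nat.cast_nonneg k
    obtain ⟨x, hx, hxe⟩ := intermediate_value_Icc (hs1 (k + 1))
      (hθ.mono Set.Icc_subset_Ici_self)
      (⟨h0.le.trans (by nlinarith), by rw [hs2]; push_cast; nlinarith⟩ :
        (k + 1) * π ∈ Set.Icc (θ a₀) (θ (s (k + 1))))
    refine (hs3 k x hx.1 hxe).trans_lt (lt_of_le_of_ne hx.2 ?_)
    rintro rfl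
    rw [hs2] at hxe
    push_cast at hxe
    nlinarith
  refine ⟨s, hmono, hs1, hs2, ?_⟩
  obtain ⟨C, hC⟩ := (isCompact_Icc (a := a₀) (b := A)).exists_bound_of_continuousOn
    (hθ.mono Set.Icc_subset_Ici_self)
  obtain ⟨K, hK⟩ := exists_nat_gt C
  refine ⟨K, fun k hk => ?_⟩
  rw [← hs2 k]
  refine hA _ (le_of_lt ?_)
  by_contra hlt
  have h1 := (le_abs_self _).trans (hC (s k) ⟨hs1 k, not_lt.1 hlt⟩)
  rw [hs2] at h1
  have h2 : (K : ℝ) ≤ k := by exact_mod_cast hk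
  have h3 := Real.pi_gt_three
  nlinarith [(Nat.cast_nonneg k : (0 : ℝ) ≤ k)]

namespace AiryBasis

variable {f f' g g' : ℂ → ℂ}

/-- The real points `a` for which some solution vanishes at both `a ± bi`, listed as an increasing
sequence with the expected asymptotics. -/
theorem exists_seq_det_eq_zero (h : AiryBasis f f' g g') {b B : ℝ} (hb : 0 < b) (hbB : b < B)
    (hB : ∀ r ∈ rayZeroModuli g, B ≤ √3 / 2 * r) :
    ∃ s : ℕ → ℝ, StrictMono s ∧ (∀ k, 0 < s k) ∧
      (∀ k, f (s k + b * I) * g (s k - b * I) - g (s k + b * I) * f (s k - b * I) = 0) ∧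
      ∃ K, ∀ k, K ≤ k → |(k + 1) * π - 2 * b * √(s k)| < π / 2 := by
  obtain ⟨c, hc⟩ := h.exists_recessive
  have hv := h.sub_const_mul c
  have hvr := h.sub_const_mul_ofReal c
  set v : ℂ → ℂ := fun z => f z - c * g z with hvdef
  have hgpos : ∀ x : ℝ, 0 < x → 0 < (g x).re := fun x hx => by
    have := (h.right.re_ofReal.growth le_rfl (by simp [h.right_zero])
      (by simp [h.deriv_right_zero]) hx.le).2
    simp [h.right_zero, h.deriv_right_zero] at this
    linarith
  set S : Set ℂ := {z | 0 < z.re} ∩ ({z | -B < z.im} ∩ {z | z.im < B}) with hS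
  have hmem : ∀ a t : ℝ, 0 < a → t ∈ Set.Icc 0 b → (a : ℂ) + t * I ∈ S := by
    intro a t ha ht
    refine ⟨?_, ?_, ?_⟩ <;> simp <;> linarith [ht.1, ht.2]
  have hv0 : ∀ z ∈ S, v z ≠ 0 := fun z hz => h.recessive_ne_zero hc hz.1
  have hg0 : ∀ z ∈ S, g z ≠ 0 := fun z hz => h.right_ne_zero hB hz.1 (abs_lt.2 hz.2)
  obtain ⟨Ψ, hΨc, hΨ0, hΨ⟩ := exists_continuousOn_arg (S := S) (q := fun z => g z / v z)
    ((convex_halfSpace_re_gt 0).inter ((convex_halfSpace_im_gt _).inter (convex_halfSpace_im_lt _)))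
    ((isOpen_lt continuous_const continuous_re).inter
      ((isOpen_lt continuous_const continuous_im).inter (isOpen_lt continuous_im continuous_const)))
    (fun x hx => by simpa using hmem x 0 hx ⟨le_rfl, hb.le⟩)
    (h.right.continuous.continuousOn.div hv.continuous.continuousOn hv0)
    (fun z hz => div_ne_zero (hg0 z hz) (hv0 z hz))
    (fun x hx => ⟨(g x).re / ((f x).re - c * (g x).re), div_pos (hgpos x hx) (hc.pos x hx), by
      simp only [hvdef]
      rw [(hvr x).1, ofReal_div, ← (h.ofReal_re x).2.2.1]⟩)
  have hconj : ∀ a t : ℝ, (a : ℂ) - t * I = starRingEnd ℂ (a + t * I) := fun a t => by simp; ring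
  have hdet : ∀ a t : ℝ, (a : ℂ) + t * I ∈ S → Real.sin (Ψ (a + t * I)) = 0 →
      f (a + t * I) * g (a - t * I) - g (a + t * I) * f (a - t * I) = 0 := by
    intro a t hz hsin
    rw [hconj, (h.conj_left _).1, (h.conj_right _).1]
    have h1 := hΨ _ hz
    set z := (a : ℂ) + t * I
    have him : (g z / v z).im = 0 := by
      rw [h1, Complex.im_ofReal_mul, Complex.exp_ofReal_mul_I_im, hsin, mul_zero]
    have hreal : starRingEnd ℂ (g z / v z) = g z / v z := conj_eq_iff_im.2 him
    have hvz := hv0 z hz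
    have hvz' : starRingEnd ℂ (v z) ≠ 0 := by simpa using hvz
    rw [map_div₀, div_eq_div_iff hvz' hvz] at hreal
    simp only [hvdef, map_sub, map_mul, conj_ofReal] at hreal
    linear_combination hreal
  have hline : ∀ a : ℝ, 0 < a → ContinuousOn (fun t : ℝ => Ψ (a + t * I)) (Set.Icc 0 b) :=
    fun a ha => hΨc.comp (by fun_prop) fun t ht => hmem a t ha ht
  set a₀ := 1 / (8 * b ^ 2) with ha₀
  have ha₀pos : 0 < a₀ := by positivity
  have hθ0 : Ψ (a₀ + b * I) < π := by
    by_contra hge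
    obtain ⟨t, ht, hte⟩ := intermediate_value_Icc hb.le (hline a₀ ha₀pos)
      (⟨by simpa [hΨ0 a₀ ha₀pos] using Real.pi_pos.le, not_lt.1 hge⟩ :
        π ∈ Set.Icc (Ψ (a₀ + (0 : ℝ) * I)) (Ψ (a₀ + b * I)))
    simp only at hte
    have ht0 : 0 < t := by
      refine lt_of_le_of_ne ht.1 ?_
      rintro rfl
      rw [show (a₀ : ℂ) + (0 : ℝ) * I = a₀ by simp, hΨ0 a₀ ha₀pos] at hte
      exact Real.pi_ne_zero hte.symm
    have hd := hdet a₀ t (hmem _ _ ha₀pos ht) (by rw [hte, Real.sin_pi])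
    have hlt : a₀ < 1 / (4 * t ^ 2) := by
      rw [ha₀]
      apply one_div_lt_one_div_of_lt (by positivity)
      nlinarith [ht.2, pow_pos ht0 2]
    have hz := h.eq_zero_of_vertical (α := g (a₀ - t * I)) (β := -f (a₀ - t * I)) ht0 hlt
      (by linear_combination hd) (by ring)
    have hw := h.wronskian (a₀ - t * I)
    rw [hz.1, neg_eq_zero.1 hz.2] at hw
    simp at hw
  set δ := b ^ 2 * √(5 * Real.exp (b ^ 2)) + 1 with hδ
  have hδ1 : 1 ≤ δ := by
    have : 0 ≤ b ^ 2 * √(5 * Real.exp (b ^ 2)) := by positivity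
    linarith
  have hlarge : ∀ a, (4 * δ) ^ 2 ≤ a → |Ψ (a + b * I) - 2 * b * √a| < π / 2 := by
    intro a ha
    have ha1 : 1 ≤ a := by nlinarith
    have ha0 : 0 < a := by linarith
    have hk : 4 * δ ≤ √a := Real.le_sqrt_of_sq_le ha
    have hk1 : 1 ≤ √a := by linarith
    have hsq : √a ^ 2 = a := Real.sq_sqrt ha0.le
    have hgp := hgpos a ha0
    have hvp := hc.pos a ha0
    set G := (g a).re with hG
    set V := (f a).re - c * (g a).re with hV
    have hratio : δ / |√a| ≤ 1 / 4 := by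
      rw [abs_of_nonneg (by linarith), div_le_iff₀ (by linarith)]
      linarith
    have hest1 : ∀ t ∈ Set.Icc 0 b,
        ‖Complex.exp (-(√a * t * I)) * g (a + t * I) - G‖ ≤ 1 / 4 * G := by
      intro t ht
      have := h.right.norm_exp_mul_sub_le (k := √a) (M := (g' a).re / G) (w₀ := G) (b := b)
        (by rwa [abs_of_nonneg (by linarith)]) hb.le ht
        (by rw [hsq]; exact (h.ofReal_re a).2.2.1)
        (by
          rw [hsq, ← ofReal_mul, div_mul_cancel₀ _ hgp.ne']
          exact (h.ofReal_re a).2.2.2)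
        (h.right.re_ofReal.abs_log_deriv_sub_sqrt_le (by simp [h.right_zero])
          (by simp [h.deriv_right_zero]) ha1)
      rw [hsq, abs_of_pos hgp] at this
      exact this.trans (mul_le_mul_of_nonneg_right hratio hgp.le)
    have hest2 : ∀ t ∈ Set.Icc 0 b,
        ‖Complex.exp (√a * t * I) * v (a + t * I) - V‖ ≤ 1 / 4 * V := by
      intro t ht
      have := hv.norm_exp_mul_sub_le (k := -√a) (M := ((f' a).re - c * (g' a).re) / V) (w₀ := V)
        (b := b) (by rwa [abs_neg, abs_of_nonneg (by linarith)]) hb.le ht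
        (by rw [neg_sq, hsq]; exact (hvr a).1)
        (by
          rw [neg_sq, hsq, ← ofReal_mul, div_mul_cancel₀ _ hvp.ne']
          exact (hvr a).2)
        (by
          rw [sub_neg_eq_add]
          exact hc.abs_log_deriv_add_sqrt_le ha1)
      rw [neg_sq, hsq, abs_neg, abs_of_pos hvp, ofReal_neg, neg_mul, neg_mul, neg_neg] at this
      exact this.trans (mul_le_mul_of_nonneg_right hratio hvp.le)
    have hφ := abs_lt_pi_div_two_of_cos_pos (φ := fun t : ℝ => Ψ (a + t * I) - 2 * t * √a)
      (s := 0) (t := b)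
      (by
        rw [Set.uIcc_of_le hb.le]
        exact (hline a ha0).sub (by fun_prop))
      (by simp [hΨ0 a ha0])
      (by
        rw [Set.uIcc_of_le hb.le]
        intro t ht
        have hz := hmem a t ha0 ht
        have h1 := hest1 t ht
        have h2 := hest2 t ht
        have h3 := hΨ _ hz
        have hvz := hv0 _ hz
        have hqz : 0 < ‖g (a + t * I) / v (a + t * I)‖ :=
          norm_pos_iff.2 (div_ne_zero (hg0 _ hz) hvz)
        set N := Complex.exp (-(√a * t * I)) * g (a + t * I) with hN
        set D := Complex.exp (√a * t * I) * v (a + t * I) with hD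
        have hD0 : D ≠ 0 := mul_ne_zero (Complex.exp_ne_zero _) hvz
        have hND : N / D = ‖g (a + t * I) / v (a + t * I)‖ *
            Complex.exp ((Ψ (a + t * I) - 2 * t * √a : ℝ) * I) := by
          rw [show ((Ψ (a + t * I) - 2 * t * √a : ℝ) : ℂ) * I
            = Ψ (a + t * I) * I + (-(√a * t * I) - √a * t * I) by push_cast; ring,
            Complex.exp_add, Complex.exp_sub, ← mul_assoc, ← h3, hN, hD]
          field_simp
        have hre : (N / D).re = ‖g (a + t * I) / v (a + t * I)‖ *
            Real.cos (Ψ (a + t * I) - 2 * t * √a) := by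
          rw [hND, Complex.re_ofReal_mul, Complex.exp_ofReal_mul_I_re]
        have hpos : 0 < (N / D).re := by
          have hN1 := (Complex.abs_re_le_norm _).trans h1
          have hN2 := (Complex.abs_im_le_norm _).trans h1
          have hD1 := (Complex.abs_re_le_norm _).trans h2
          have hD2 := (Complex.abs_im_le_norm _).trans h2
          simp only [sub_re, sub_im, Complex.ofReal_re, ofReal_im, sub_zero, abs_le]
            at hN1 hN2 hD1 hD2
          rw [Complex.div_re, ← add_div]
          refine div_pos ?_ (Complex.normSq_pos.2 hD0)
          have e1 : 3 / 4 * G * (3 / 4 * V) ≤ N.re * D.re :=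
            mul_le_mul (by linarith) (by linarith) (by positivity) (by linarith)
          have e2 : |N.im * D.im| ≤ 1 / 4 * G * (1 / 4 * V) := by
            rw [abs_mul]
            exact mul_le_mul (abs_le.2 hN2) (abs_le.2 hD2) (abs_nonneg _) (by positivity)
          have e3 := neg_abs_le (N.im * D.im)
          have e4 := mul_pos hgp hvp
          linarith
        rw [hre] at hpos
        exact pos_of_mul_pos_right hpos hqz.le)
    convert! hφ using 3
  obtain ⟨s, hs1, hs2, hs3, hs4⟩ := exists_seq_of_arg (θ := fun a => Ψ (a + b * I)) hb
    (hΨc.comp (by fun_prop) fun a ha =>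
      hmem a b (ha₀pos.trans_le ha) (Set.right_mem_Icc.2 hb.le)) hθ0 hlarge
  refine ⟨s, hs1, fun k => ha₀pos.trans_le (hs2 k), fun k => ?_, hs4⟩
  refine hdet _ _ (hmem _ _ (ha₀pos.trans_le (hs2 k)) (Set.right_mem_Icc.2 hb.le)) ?_
  rw [hs3 k]
  exact_mod_cast Real.sin_nat_mul_pi (k + 1)

end AiryBasis

/-! ### Counting zeros with Jensen's formula -/

theorem sum_log_le_of_norm_le {F : ℂ → ℂ} (hF : Differentiable ℂ F) (h0 : F 0 ≠ 0) {R : ℝ}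
    (hR : 0 < R) (Z : Finset ℂ) (hZ : ∀ u ∈ Z, F u = 0 ∧ ‖u‖ ≤ R) {β : ℝ → ℝ} (hβ : Continuous β)
    (hb : ∀ θ ∈ Set.Icc 0 (2 * π), ‖F (circleMap 0 R θ)‖ ≤ Real.exp (β θ)) :
    ∑ u ∈ Z, Real.log (R / ‖u‖) + Real.log ‖F 0‖ ≤ (2 * π)⁻¹ * ∫ θ in 0..2 * π, β θ := by
  have hFa : ∀ U : Set ℂ, AnalyticOnNhd ℂ F U := fun U z _ => hF.analyticAt z
  have hpi := Real.pi_pos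
  have hjensen := (hFa (Metric.closedBall 0 |R|)).circleAverage_log_norm hR.ne' h0
  have hfin := (MeromorphicOn.divisor F (Metric.closedBall 0 |R|)).finiteSupport
    (isCompact_closedBall 0 |R|)
  set d := MeromorphicOn.divisor F (Metric.closedBall 0 |R|) with hd
  have hd0 : ∀ u, 0 ≤ d u := fun u =>
    (MeromorphicOn.AnalyticOnNhd.divisor_nonneg (hFa (Metric.closedBall 0 |R|))) u
  have hd1 : ∀ u ∈ Z, 1 ≤ d u := by
    intro u hu
    have hmem : u ∈ Metric.closedBall (0 : ℂ) |R| := by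
      simpa [abs_of_pos hR] using (hZ u hu).2
    refine Int.add_one_le_iff.2 (lt_of_le_of_ne (hd0 u) (Ne.symm ?_))
    rw [hd, MeromorphicOn.AnalyticOnNhd.divisor_apply (hFa _) hmem]
    have h1 : analyticOrderAt F u ≠ 0 := (hF.analyticAt u).analyticOrderAt_ne_zero.2 (hZ u hu).1
    have h2 : analyticOrderAt F u ≠ ⊤ :=
      (hFa Set.univ).analyticOrderAt_ne_top_of_isPreconnected isPreconnected_univ
        (Set.mem_univ 0) (Set.mem_univ u) (by
          rw [(hF.analyticAt 0).analyticOrderAt_eq_zero.2 h0]; simp)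
    lift analyticOrderAt F u to ℕ using h2 with m
    simpa using h1
  have hsupp : ∀ u, d u ≠ 0 → ‖u‖ ≤ R := fun u hu => by
    simpa [abs_of_pos hR] using d.supportWithinDomain hu
  have hlog : ∀ u : ℂ, ‖u‖ ≤ R → 0 ≤ Real.log (R / ‖u‖) := by
    intro u hu
    rcases (norm_nonneg u).eq_or_lt with h | h
    · simp [← h]
    · exact Real.log_nonneg ((one_le_div h).2 hu)
  have hsum : ∑ u ∈ Z, Real.log (R / ‖u‖) ≤ ∑ᶠ u, d u * Real.log (R * ‖0 - u‖⁻¹) := by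
    have hs : (Function.support fun u => (d u : ℝ) * Real.log (R * ‖0 - u‖⁻¹))
        ⊆ ((hfin.toFinset ∪ Z : Finset ℂ) : Set ℂ) := by
      intro u hu
      have : d u ≠ 0 := by
        intro h
        simp [h] at hu
      simp [this]
    rw [finsum_eq_sum_of_support_subset _ hs]
    have h1 : ∑ u ∈ Z, Real.log (R / ‖u‖) ≤ ∑ u ∈ Z, (d u : ℝ) * Real.log (R * ‖0 - u‖⁻¹) := by
      refine Finset.sum_le_sum fun u hu => ?_
      rw [zero_sub, norm_neg, ← div_eq_mul_inv]
      have h2 : (1 : ℝ) ≤ d u := by exact_mod_cast hd1 u hu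
      exact le_mul_of_one_le_left (hlog u (hZ u hu).2) h2
    refine h1.trans (Finset.sum_le_sum_of_subset_of_nonneg Finset.subset_union_right ?_)
    intro u _ _
    rw [zero_sub, norm_neg, ← div_eq_mul_inv]
    by_cases h : d u = 0
    · simp [h]
    · exact mul_nonneg (by exact_mod_cast hd0 u) (hlog u (hsupp u h))
  have havg : Real.circleAverage (fun z => Real.log ‖F z‖) 0 R
      ≤ (2 * π)⁻¹ * ∫ θ in 0..2 * π, β θ := by
    rw [Real.circleAverage_def, smul_eq_mul]
    refine mul_le_mul_of_nonneg_left ?_ (by positivity)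
    refine intervalIntegral.integral_mono_ae_restrict (by positivity)
      ((hFa (Metric.sphere 0 |R|)).meromorphicOn.circleIntegrable_log_norm)
      (hβ.intervalIntegrable _ _) ?_
    have hne : ∀ᶠ z in Filter.codiscreteWithin (Metric.sphere (0 : ℂ) |R|), F z ≠ 0 := by
      have h1 := (hFa Set.univ).preimage_zero_mem_codiscrete (x := 0) h0
      exact Filter.codiscreteWithin_mono (Set.subset_univ _) h1
    have hne' : ∀ᶠ θ in Filter.codiscreteWithin (Set.Icc 0 (2 * π)),
        F (circleMap 0 R θ) ≠ 0 :=
      Filter.codiscreteWithin_mono (Set.subset_univ _) (circleMap_preimage_codiscrete hR.ne' hne)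
    filter_upwards [ae_restrict_le_codiscreteWithin measurableSet_Icc hne',
      ae_restrict_mem measurableSet_Icc] with θ h1 h2
    exact (Real.log_le_iff_le_exp (norm_pos_iff.2 h1)).2 (hb θ h2)
  linarith

theorem sum_log_half_le (n : ℕ) : ∑ k ∈ Finset.range n, Real.log ((k : ℝ) + 3 / 2) ≤
    (n + 1) * Real.log (n + 1 / 2) - (n + 1 / 2) + (1 / 2 + Real.log 2) := by
  induction n with
  | zero =>
    simp [Real.log_inv]
    linarith
  | succ n ih =>
    rw [Finset.sum_range_succ]
    have hn : (0 : ℝ) ≤ n := Nat.cast_nonneg n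
    have hx : (0 : ℝ) < n + 1 / 2 := by linarith
    have h1 := Real.le_log_one_add_of_nonneg (x := 1 / ((n : ℝ) + 1 / 2)) (by positivity)
    rw [show 1 + 1 / ((n : ℝ) + 1 / 2) = (n + 3 / 2) / (n + 1 / 2) by field_simp; ring,
      Real.log_div (by linarith) hx.ne',
      show 2 * (1 / ((n : ℝ) + 1 / 2)) / (1 / ((n : ℝ) + 1 / 2) + 2) = 1 / (n + 1) by
        field_simp; ring, div_le_iff₀ (by linarith)] at h1
    push_cast
    rw [show (n : ℝ) + 1 + 1 / 2 = n + 3 / 2 by ring]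
    nlinarith

/-- An entire function with the growth of a Dirichlet determinant has no zeros besides a sequence
of positive zeros with the expected density. -/
theorem mem_range_of_zero {F : ℂ → ℂ} (hF : Differentiable ℂ F) (h0 : F 0 ≠ 0) {b ε : ℝ}
    (hb : 0 < b) (hε : 0 < ε)
    (hgrowth : ∀ R θ : ℝ, 0 < R → θ ∈ Set.Icc 0 (2 * π) → ‖F (circleMap 0 R θ)‖ ≤
      b / √(ε * R) * Real.exp (2 * √(ε * R) * Real.sin (θ / 2) + ε / √(ε * R)))
    {lam : ℕ → ℝ} (hmono : StrictMono lam) (hpos : ∀ k, 0 < lam k) (hzero : ∀ k, F (lam k) = 0)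
    {K : ℕ} (hK : ∀ k, K ≤ k → ε * lam k ≤ ((k + 3 / 2) * (π / 2)) ^ 2) {z : ℂ} (hz : F z = 0) :
    z ∈ Set.range fun k => (lam k : ℂ) := by
  by_contra hnot
  have hpi := Real.pi_pos
  have hz0 : z ≠ 0 := by rintro rfl; exact h0 hz
  have hznorm : 0 < ‖z‖ := norm_pos_iff.2 hz0
  set e : ℕ → ℝ := fun k => max 0 (Real.log (ε * lam k / ((k + 3 / 2) * (π / 2)) ^ 2)) with he
  set E := ∑ k ∈ Finset.range K, e k with hE
  have he0 : ∀ k, 0 ≤ e k := fun k => le_max_left _ _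
  have heE : ∀ n, ∑ k ∈ Finset.range n, e k ≤ E := by
    intro n
    have h1 : ∑ k ∈ Finset.range n, e k ≤ ∑ k ∈ Finset.range (max n K), e k :=
      Finset.sum_le_sum_of_subset_of_nonneg
        (Finset.range_subset_range.2 (le_max_left _ _)) fun k _ _ => he0 k
    refine h1.trans (le_of_eq (Finset.sum_subset
      (Finset.range_subset_range.2 (le_max_right n K)) fun k _ hk => ?_).symm)
    rw [Finset.mem_range, not_lt] at hk
    refine max_eq_left (Real.log_nonpos ?_ ?_)
    · have := hpos k
      positivity
    · exact div_le_one_of_le₀ (hK k hk) (by positivity)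
  have hbound : ∀ᶠ n : ℕ in Filter.atTop, Real.log ((n : ℝ) + 1 / 2) ≤
      ε / (π / 2) * 2 + Real.log b - Real.log (π / 2) + E + 2 * (1 / 2 + Real.log 2)
        - Real.log ((π / 2) ^ 2 / (ε * ‖z‖)) - Real.log ‖F 0‖ := by
    have htend : Filter.Tendsto (fun n : ℕ => (((n : ℝ) + 1 / 2) * (π / 2)) ^ 2 / ε)
        Filter.atTop Filter.atTop := by
      refine Filter.Tendsto.atTop_div_const hε ?_
      refine (Filter.tendsto_pow_atTop two_ne_zero).comp ?_
      exact (Filter.tendsto_atTop_add_const_right _ _ tendsto_natCast_atTop_atTop).atTop_mul_const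
        (by positivity)
    filter_upwards [htend.eventually_ge_atTop (max ‖z‖ (lam K)), Filter.eventually_ge_atTop K]
      with n hn hnK
    set x := (n : ℝ) + 1 / 2 with hx
    set R := (x * (π / 2)) ^ 2 / ε with hRdef
    have hx0 : 0 < x := by positivity
    have hR : 0 < R := by positivity
    have hεR : ε * R = (x * (π / 2)) ^ 2 := by rw [hRdef]; field_simp
    have hsqrt : √(ε * R) = x * (π / 2) := by rw [hεR, Real.sqrt_sq (by positivity)]
    have hlamR : ∀ k, k < n → lam k ≤ R := by
      intro k hk
      rcases le_total K k with h | h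
      · rw [hRdef, le_div_iff₀ hε, mul_comm]
        refine (hK k h).trans ?_
        have : (k : ℝ) + 1 ≤ n := by exact_mod_cast hk
        gcongr
        linarith
      · exact (hmono.monotone h).trans ((le_max_right _ _).trans hn)
    set Z : Finset ℂ := insert z ((Finset.range n).image fun k => (lam k : ℂ)) with hZ
    have hj := sum_log_le_of_norm_le hF h0 hR Z
      (by
        intro u hu
        rw [hZ, Finset.mem_insert, Finset.mem_image] at hu
        rcases hu with rfl | ⟨k, hk, rfl⟩
        · exact ⟨hz, (le_max_left _ _).trans hn⟩
        · refine ⟨hzero k, ?_⟩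
          rw [Complex.norm_real, Real.norm_eq_abs, abs_of_pos (hpos k)]
          exact hlamR k (Finset.mem_range.1 hk))
      (β := fun θ => Real.log (b / (x * (π / 2))) +
        (2 * (x * (π / 2)) * Real.sin (θ / 2) + ε / (x * (π / 2)))) (by fun_prop)
      (by
        intro θ hθ
        refine (hgrowth R θ hR hθ).trans (le_of_eq ?_)
        rw [hsqrt, Real.exp_add (Real.log _), Real.exp_log (by positivity)])
    have hinteg : ∫ θ in 0..2 * π, (Real.log (b / (x * (π / 2))) +
        (2 * (x * (π / 2)) * Real.sin (θ / 2) + ε / (x * (π / 2))))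
        = 2 * π * (Real.log (b / (x * (π / 2))) + ε / (x * (π / 2))) + 4 * x * π := by
      have hi : Continuous fun θ : ℝ => 2 * (x * (π / 2)) * Real.sin (θ / 2) := by fun_prop
      have hi' : Continuous fun θ : ℝ =>
          2 * (x * (π / 2)) * Real.sin (θ / 2) + ε / (x * (π / 2)) := by fun_prop
      rw [intervalIntegral.integral_add intervalIntegrable_const (hi'.intervalIntegrable _ _),
        intervalIntegral.integral_add (hi.intervalIntegrable _ _) intervalIntegrable_const,
        intervalIntegral.integral_const_mul,
        intervalIntegral.integral_comp_div (fun t => Real.sin t) two_ne_zero]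
      simp
      ring
    rw [hinteg] at hj
    have hznin : z ∉ (Finset.range n).image fun k => (lam k : ℂ) := by
      intro h
      obtain ⟨k, _, hk⟩ := Finset.mem_image.1 h
      exact hnot ⟨k, hk⟩
    rw [hZ, Finset.sum_insert hznin, Finset.sum_image (by
      intro k _ l _ hkl
      exact hmono.injective (Complex.ofReal_injective hkl))] at hj
    have hterm : ∀ k ∈ Finset.range n, 2 * Real.log x - 2 * Real.log ((k : ℝ) + 3 / 2) - e k ≤
        Real.log (R / ‖(lam k : ℂ)‖) := by
      intro k _
      have hl := hpos k
      have h1 : Real.log (ε * lam k / ((k + 3 / 2) * (π / 2)) ^ 2) ≤ e k := le_max_right _ _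
      rw [Complex.norm_real, Real.norm_eq_abs, abs_of_pos hl, hRdef]
      have h2 : (x * (π / 2)) ^ 2 / ε / lam k = x ^ 2 / ((k : ℝ) + 3 / 2) ^ 2 /
          (ε * lam k / ((k + 3 / 2) * (π / 2)) ^ 2) := by
        field_simp
      rw [h2, Real.log_div (by positivity) (by positivity),
        Real.log_div (by positivity) (by positivity), Real.log_pow, Real.log_pow]
      push_cast
      linarith
    have hsum := Finset.sum_le_sum hterm
    rw [Finset.sum_sub_distrib, Finset.sum_sub_distrib, Finset.sum_const, ← Finset.mul_sum,
      Finset.card_range, nsmul_eq_mul] at hsum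
    have htrap := sum_log_half_le n
    rw [← hx] at htrap
    have hlogz : Real.log (R / ‖z‖) = 2 * Real.log x + Real.log ((π / 2) ^ 2 / (ε * ‖z‖)) := by
      rw [hRdef, show (x * (π / 2)) ^ 2 / ε / ‖z‖ = x ^ 2 * ((π / 2) ^ 2 / (ε * ‖z‖)) by
        field_simp, Real.log_mul (by positivity) (by positivity), Real.log_pow]
      push_cast
      ring
    have hrhs : (2 * π)⁻¹ * (2 * π * (Real.log (b / (x * (π / 2))) + ε / (x * (π / 2))) + 4 * x * π)
        = Real.log b - Real.log x - Real.log (π / 2) + ε / (x * (π / 2)) + 2 * x := by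
      rw [Real.log_div hb.ne' (by positivity), Real.log_mul hx0.ne' (by positivity)]
      field_simp
      ring
    have hsmall : ε / (x * (π / 2)) ≤ ε / (π / 2) * 2 := by
      rw [div_mul_eq_mul_div, div_le_div_iff₀ (by positivity) (by positivity)]
      have : 1 / 2 ≤ x := by rw [hx]; linarith [(Nat.cast_nonneg n : (0 : ℝ) ≤ n)]
      nlinarith [mul_pos hε hpi]
    rw [hrhs, hlogz] at hj
    have hEn := heE n
    linarith
  have hlim : Filter.Tendsto (fun n : ℕ => Real.log ((n : ℝ) + 1 / 2)) Filter.atTop Filter.atTop :=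
    Real.tendsto_log_atTop.comp
      (Filter.tendsto_atTop_add_const_right _ _ tendsto_natCast_atTop_atTop)
  obtain ⟨n, h1, h2⟩ := (hbound.and (hlim.eventually_gt_atTop _)).exists
  exact absurd h1 (not_le.2 h2)

/-! ### The Dirichlet determinant -/

/-- The determinant of the Dirichlet conditions at `x = ∓1` for the solutions
`x ↦ f (b * (z - i * x))`, `x ↦ g (b * (z - i * x))`. -/
def dirichletDet (f g : ℂ → ℂ) (b : ℝ) (z : ℂ) : ℂ :=
  f (b * z + b * I) * g (b * z - b * I) - g (b * z + b * I) * f (b * z - b * I)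

namespace AiryBasis

variable {f f' g g' : ℂ → ℂ}

theorem differentiable_dirichletDet (h : AiryBasis f f' g g') (b : ℝ) :
    Differentiable ℂ (dirichletDet f g b) := by
  have hf := h.left.differentiable
  have hg := h.right.differentiable
  unfold dirichletDet
  fun_prop

theorem dirichletDet_zero_ne_zero (h : AiryBasis f f' g g') {b : ℝ} (hb : 0 < b) :
    dirichletDet f g b 0 ≠ 0 := by
  intro h0
  simp only [dirichletDet, mul_zero] at h0
  have h1 := h.eq_zero_of_vertical (α := g (0 - b * I)) (β := -f (0 - b * I)) (a := 0) hb
    (by positivity) (by push_cast; linear_combination h0) (by push_cast; ring)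
  have h2 := h.wronskian (0 - b * I)
  rw [h1.1, neg_eq_zero.1 h1.2] at h2
  simp at h2

theorem dirichletDet_eq_zero_of_isModelEigenvalue (h : AiryBasis f f' g g') {b ε : ℝ} (hb : 0 < b)
    (hε : ε = b ^ 3) {z : ℂ} (hz : IsModelEigenvalue ε z) : dirichletDet f g b z = 0 := by
  obtain ⟨y, hy, ⟨x, hx, hyx⟩, hode, hy1, hy2⟩ := hz
  by_contra hdet
  have hb' : (b : ℂ) ≠ 0 := by exact_mod_cast hb.ne'
  have hdy : ContDiff ℝ 1 (deriv y) := by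
    have : ContDiff ℝ (1 + 1) y := by simpa [one_add_one_eq_two] using hy
    exact (contDiff_succ_iff_deriv.1 this).2.2
  have hD1 : ∀ x, HasDerivAt y (deriv y x) x := fun x =>
    (hy.differentiable (by norm_num) x).hasDerivAt
  have hD2 : ∀ x, HasDerivAt (deriv y) (deriv (deriv y) x) x := fun x =>
    (hdy.differentiable (by norm_num) x).hasDerivAt
  have hode' : Set.EqOn (deriv (deriv y))
      (fun x : ℝ => (-(b * I)) ^ 2 * (b * z + x * -(b * I)) * y x) (Set.Icc (-1) 1) := by
    have hcy := hy.continuous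
    have hcy2 := hdy.continuous_deriv le_rfl
    rw [← closure_Ioo (show (-1 : ℝ) ≠ 1 by norm_num)]
    refine Set.EqOn.closure (fun x hx => ?_) hcy2 (by fun_prop)
    have h1 := hode x hx
    rw [hε] at h1
    push_cast at h1
    field_simp at h1
    linear_combination -h1 - b ^ 3 * (z - x * I) * y x * I_sq
  have hW : ∀ w w' : ℂ → ℂ, AirySolution w w' → ∀ x ∈ Set.Icc (-1 : ℝ) 1,
      y x * (-(b * I) * w' (b * z + x * -(b * I))) - deriv y x * w (b * z + x * -(b * I)) =
        y (-1) * (-(b * I) * w' (b * z + (-1 : ℝ) * -(b * I)))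
          - deriv y (-1) * w (b * z + (-1 : ℝ) * -(b * I)) := by
    intro w w' hw
    have hd : ∀ x : ℝ, HasDerivAt (fun x : ℝ => y x * (-(b * I) * w' (b * z + x * -(b * I)))
        - deriv y x * w (b * z + x * -(b * I)))
        (((-(b * I)) ^ 2 * (b * z + x * -(b * I)) * y x - deriv (deriv y) x)
          * w (b * z + x * -(b * I))) x := by
      intro x
      convert! ((hD1 x).mul (hw.hasDerivAt_deriv_line (b * z) (-(b * I)) x)).sub
        ((hD2 x).mul (hw.hasDerivAt_line (b * z) (-(b * I)) x)) using 1
      ring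
    refine constant_of_has_deriv_right_zero
      (fun x _ => (hd x).continuousAt.continuousWithinAt) fun x hx => ?_
    have := (hd x).hasDerivWithinAt (s := Set.Ici x)
    rwa [hode' (Set.Ico_subset_Icc_self hx), sub_self, zero_mul] at this
  have hWf := hW f f' h.left
  have hWg := hW g g' h.right
  have e1 : (b : ℂ) * z + (1 : ℝ) * -(b * I) = b * z - b * I := by push_cast; ring
  have e2 : (b : ℂ) * z + (-1 : ℝ) * -(b * I) = b * z + b * I := by push_cast; ring
  have hf1 := hWf 1 (by norm_num)
  have hg1 := hWg 1 (by norm_num)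
  rw [e1, e2, hy1, hy2] at hf1 hg1
  have hm : deriv y (-1) = 0 := by
    refine (mul_eq_zero.1 ?_).resolve_right hdet
    unfold dirichletDet
    linear_combination g (b * z - b * I) * hf1 - f (b * z - b * I) * hg1
  have hfx := hWf x hx
  have hgx := hWg x hx
  rw [hm, hy1] at hfx hgx
  have hwr := h.wronskian (b * z + x * -(b * I))
  have : y x * (b * I) = 0 := by
    set q := (b : ℂ) * z + x * -(b * I)
    linear_combination g q * hfx - f q * hgx - y x * (b * I) * hwr
  exact hyx ((mul_eq_zero.1 this).resolve_right (mul_ne_zero hb' I_ne_zero))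

theorem isModelEigenvalue_of_dirichletDet_eq_zero (h : AiryBasis f f' g g') {b ε : ℝ} (hb : 0 < b)
    (hε : ε = b ^ 3) {z : ℂ} (hz : dirichletDet f g b z = 0) : IsModelEigenvalue ε z := by
  have hb' : (b : ℂ) ≠ 0 := by exact_mod_cast hb.ne'
  have e1 : (b : ℂ) * z + (1 : ℝ) * -(b * I) = b * z - b * I := by push_cast; ring
  have e2 : (b : ℂ) * z + (-1 : ℝ) * -(b * I) = b * z + b * I := by push_cast; ring
  have hw := h.left.linear_combination h.right (g (b * z - b * I)) (-f (b * z - b * I))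
  have hy1 := hw.hasDerivAt_line (b * z) (-(b * I))
  have hy2 := hw.hasDerivAt_deriv_line (b * z) (-(b * I))
  refine ⟨fun x : ℝ => g (b * z - b * I) * f (b * z + x * -(b * I))
    + -f (b * z - b * I) * g (b * z + x * -(b * I)), ?_, ?_, ?_, ?_, ?_⟩
  · have h1 : ContDiff ℝ 2 fun u : ℂ => g (b * z - b * I) * f u + -f (b * z - b * I) * g u :=
      (hw.differentiable.contDiff (n := 2)).restrict_scalars ℝ
    have h2 : ContDiff ℝ 2 fun x : ℝ => (b : ℂ) * z + x * -(b * I) :=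
      contDiff_const.add (ofRealCLM.contDiff.mul contDiff_const)
    exact h1.comp h2
  · by_contra! hall
    have h0 : (0 : ℝ) ∈ Set.Ioo (-1 : ℝ) 1 := by norm_num
    have h1 : ∀ s ∈ Set.Ioo (-1 : ℝ) 1, g (b * z - b * I) * f (b * z + s * -(b * I))
        + -f (b * z - b * I) * g (b * z + s * -(b * I)) = 0 :=
      fun s hs => hall s (Set.Ioo_subset_Icc_self hs)
    have h2 := hw.deriv_eq_zero_of_line (neg_ne_zero.2 (mul_ne_zero hb' I_ne_zero)) h1 h0
    have h3 := h.eq_zero_of_eq_zero (h1 0 h0) h2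
    have h4 := h.wronskian (b * z - b * I)
    rw [h3.1, neg_eq_zero.1 h3.2] at h4
    simp at h4
  · intro x _
    have hd : deriv (fun x : ℝ => g (b * z - b * I) * f (b * z + x * -(b * I))
        + -f (b * z - b * I) * g (b * z + x * -(b * I))) = _ := funext fun x => (hy1 x).deriv
    rw [hd, (hy2 x).deriv, hε]
    simp only
    generalize g (b * z - b * I) * f (b * z + x * -(b * I))
        + -f (b * z - b * I) * g (b * z + x * -(b * I)) = u
    push_cast
    field_simp
    linear_combination (-(z - x * I)) * u * I_sq
  · simp only [e2]
    rw [dirichletDet] at hz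
    linear_combination hz
  · simp only [e1]
    ring

theorem norm_dirichletDet_le (h : AiryBasis f f' g g') {b ε : ℝ} (hb : 0 < b)
    (hε : ε = b ^ 3) {R θ : ℝ} (hR : 0 < R) (hθ : θ ∈ Set.Icc 0 (2 * π)) :
    ‖dirichletDet f g b (circleMap 0 R θ)‖ ≤
      b / √(ε * R) * Real.exp (2 * √(ε * R) * Real.sin (θ / 2) + ε / √(ε * R)) := by
  have hε0 : 0 < ε := by rw [hε]; positivity
  have hpi := Real.pi_pos
  set q := √(ε * R) with hq
  have hq0 : 0 < q := Real.sqrt_pos.2 (by positivity)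
  have hq2 : q ^ 2 = ε * R := Real.sq_sqrt (by positivity)
  set z := circleMap 0 R θ with hz
  set κ : ℂ := q * exp ((θ / 2 : ℝ) * I) with hκ
  have hκ2 : κ ^ 2 = ε * z := by
    rw [hκ, mul_pow, ← Complex.exp_nat_mul, hz, circleMap, zero_add, ← mul_assoc,
      ← ofReal_pow, hq2]
    push_cast
    ring_nf
  have hκn : ‖κ‖ = q := by
    rw [hκ, norm_mul, Complex.norm_exp_ofReal_mul_I, mul_one, Complex.norm_real,
      Real.norm_of_nonneg hq0.le]
  have hκim : κ.im = q * Real.sin (θ / 2) := by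
    rw [hκ, im_ofReal_mul, exp_ofReal_mul_I_im]
  have hsin : 0 ≤ Real.sin (θ / 2) :=
    Real.sin_nonneg_of_nonneg_of_le_pi (by linarith [hθ.1]) (by linarith [hθ.2])
  have hb3 : (ε : ℂ) = b ^ 3 := by rw [hε]; push_cast; rfl
  have e1 : (b : ℂ) * z + (1 : ℝ) * -(b * I) = b * z - b * I := by push_cast; ring
  have e2 : (b : ℂ) * z + (-1 : ℝ) * -(b * I) = b * z + b * I := by push_cast; ring
  have hw := h.left.linear_combination h.right (g (b * z + b * I)) (-f (b * z + b * I))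
  have hen := energy_le (κ := κ) (r := fun x => -(I * ε * x)) (ρ := ε) (x₀ := -1) (x₁ := 1)
    (norm_pos_iff.1 (hκn ▸ hq0)) (by norm_num) (hw.hasDerivAt_line (b * z) (-(b * I)))
    (fun x => by
      convert! hw.hasDerivAt_deriv_line (b * z) (-(b * I)) x using 1
      rw [hκ2, hb3]
      linear_combination (-(b : ℂ) ^ 3 * (z - x * I)) *
        (g (b * z + b * I) * f (b * z + x * -(b * I))
        + -f (b * z + b * I) * g (b * z + x * -(b * I))) * I_sq)
    (fun x hx => by
      rw [norm_neg, norm_mul, norm_mul, norm_I, one_mul, Complex.norm_real, Complex.norm_real,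
        Real.norm_of_nonneg hε0.le, Real.norm_eq_abs]
      exact mul_le_of_le_one_right hε0.le (abs_le.2 hx))
  have hwr := h.wronskian (b * z + b * I)
  have hbI : ‖(b : ℂ) * I‖ = b := by simp [abs_of_pos hb]
  rw [e1, e2, show g (b * z + b * I) * f (b * z + b * I) + -f (b * z + b * I) * g (b * z + b * I)
    = 0 by ring, show -(b * I) * (g (b * z + b * I) * f' (b * z + b * I)
      + -f (b * z + b * I) * g' (b * z + b * I)) = b * I by linear_combination (b * I) * hwr,
    show g (b * z + b * I) * f (b * z - b * I) + -f (b * z + b * I) * g (b * z - b * I)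
      = -dirichletDet f g b z by rw [dirichletDet]; ring, norm_neg, norm_zero, hbI, hκim,
    abs_of_nonneg (by positivity), hκn] at hen
  have hsq : (q * ‖dirichletDet f g b z‖) ^ 2 ≤
      (b * Real.exp (2 * q * Real.sin (θ / 2) + ε / q)) ^ 2 := by
    rw [mul_pow b, ← Real.exp_nat_mul]
    refine le_trans ?_ (hen.trans (le_of_eq ?_))
    · rw [mul_pow]
      exact le_add_of_nonneg_left (by positivity)
    · push_cast
      ring_nf
  have := (pow_le_pow_iff_left₀ (by positivity) (by positivity) two_ne_zero).1 hsq
  rw [div_mul_eq_mul_div, le_div_iff₀ hq0]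
  linarith

end AiryBasis

/-! ### Passage from `Ai`, `Bi` to the normalized basis -/

theorem IsAiry.airySolution {w : ℂ → ℂ} {w₀ w₁ : ℝ} (h : IsAiry w w₀ w₁) :
    AirySolution w (deriv w) where
  hasDerivAt z := (h.1 z).hasDerivAt
  hasDerivAt_deriv z := by
    rw [← h.2.2.1 z]
    exact (h.2.1 z).hasDerivAt

theorem exists_airyBasis {Ai Bi : ℂ → ℂ} (hAi : IsAiryAi Ai) (hBi : IsAiryBi Bi) :
    ∃ f f' g g' : ℂ → ℂ, AiryBasis f f' g g' ∧
      rayZeroModuli g = rayZeroModuli (Uminus Ai Bi) := by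
  have hG1 : 0 < Real.Gamma (1 / 3) := Real.Gamma_pos_of_pos (by norm_num)
  have hG2 : 0 < Real.Gamma (2 / 3) := Real.Gamma_pos_of_pos (by norm_num)
  have h3 : √3 = (3 : ℝ) ^ ((1 : ℝ) / 2) := Real.sqrt_eq_rpow 3
  have e1 : √3 * (3 : ℝ) ^ (-(2 : ℝ) / 3) = 3 ^ (-(1 : ℝ) / 6) := by
    rw [h3, ← Real.rpow_add (by norm_num)]
    norm_num
  have e2 : √3 * (3 : ℝ) ^ (-(1 : ℝ) / 3) = 3 ^ ((1 : ℝ) / 6) := by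
    rw [h3, ← Real.rpow_add (by norm_num)]
    norm_num
  set p := (3 : ℝ) ^ (-(1 : ℝ) / 6) / Real.Gamma (2 / 3) with hp
  set q := (3 : ℝ) ^ ((1 : ℝ) / 6) / Real.Gamma (1 / 3) with hq
  have hp0 : (p : ℂ) ≠ 0 := ofReal_ne_zero.2 (by positivity)
  have hq0 : (q : ℂ) ≠ 0 := ofReal_ne_zero.2 (by positivity)
  have hA0 : (√3 : ℂ) * Ai 0 = p := by
    rw [hAi.2.2.2.1, hp, ← e1]
    push_cast
    ring
  have hA1 : (√3 : ℂ) * deriv Ai 0 = -q := by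
    rw [hAi.2.2.2.2, hq, ← e2]
    push_cast
    ring
  have hB0 : Bi 0 = p := hBi.2.2.2.1
  have hB1 : deriv Bi 0 = q := hBi.2.2.2.2
  refine ⟨_, _, _, _, ⟨hAi.airySolution.linear_combination hBi.airySolution (√3 / (2 * p))
    (1 / (2 * p)), hAi.airySolution.linear_combination hBi.airySolution (-√3 / (2 * q))
    (1 / (2 * q)), ?_, ?_, ?_, ?_⟩, ?_⟩
  · rw [hB0]
    field_simp
    linear_combination hA0
  · rw [hB1]
    field_simp
    linear_combination hA1
  · rw [hB0]
    field_simp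
    linear_combination -hA0
  · rw [hB1]
    field_simp
    linear_combination -hA1
  · ext r
    refine and_congr Iff.rfl ?_
    have : ∀ z, -(√3 : ℂ) / (2 * q) * Ai z + 1 / (2 * q) * Bi z
        = (2 * q : ℂ)⁻¹ * Uminus Ai Bi z := by
      intro z
      rw [Uminus]
      field_simp
    simp only [this, mul_eq_zero, inv_eq_zero, hq0, OfNat.ofNat_ne_zero, or_self, false_or]

/-- A sequence whose square roots are asymptotically equidistant. -/
theorem tendsto_div_sq_of_abs_sub_lt {u : ℕ → ℝ} {K : ℕ}
    (h : ∀ k : ℕ, K ≤ k → |(k + 1) * π - 2 * u k| < π / 2) :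
    Filter.Tendsto (fun k : ℕ => u k ^ 2 / (π * (k + 1) / 2) ^ 2) Filter.atTop (nhds 1) := by
  have hpi := Real.pi_pos
  have h1 : Filter.Tendsto (fun k : ℕ => u k / (π * (k + 1) / 2) - 1) Filter.atTop (nhds 0) := by
    refine squeeze_zero_norm' (a := fun k : ℕ => 1 / ((k : ℝ) + 1)) ?_
      tendsto_one_div_add_atTop_nhds_zero_nat
    filter_upwards [Filter.eventually_ge_atTop K] with k hk
    have hk1 : (0 : ℝ) < (k : ℝ) + 1 := by positivity
    rw [show u k / (π * (k + 1) / 2) - 1 = -((k + 1) * π - 2 * u k) / (π * (k + 1)) by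
      field_simp; ring, norm_div, norm_neg, Real.norm_eq_abs, Real.norm_of_nonneg (by positivity),
      div_le_div_iff₀ (by positivity) hk1]
    nlinarith [h k hk]
  have h2 := (h1.add_const 1).pow 2
  simpa [div_pow] using h2

/-- For `0 < ε < ε₁ = (√3·α₁/2)³` (where `α₁` is the smallest modulus of a zero of `U₋`
on the ray `arg z = π/3`), the eigenvalues of `T(ε)` form a strictly increasing sequence
`(λ_k)` of positive reals tending to `+∞`, with `λ_k · ε / (πk/2)² → 1` as `k → ∞`
(the sequence is indexed from `0`, so `lam k` is the paper's `λ_{k+1}`). -/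
theorem real_spectrum_structure_before_first_collision (Ai Bi : ℂ → ℂ)
    (hAi : IsAiryAi Ai) (hBi : IsAiryBi Bi)
    (α₁ : ℝ) (hα₁ : IsLeast (rayZeroModuli (Uminus Ai Bi)) α₁)
    (ε : ℝ) (hε : 0 < ε) (hε' : ε < (Real.sqrt 3 * α₁ / 2) ^ 3) :
    ∃ lam : ℕ → ℝ, StrictMono lam ∧ (∀ k : ℕ, 0 < lam k) ∧
      Filter.Tendsto lam Filter.atTop Filter.atTop ∧
      {z : ℂ | IsModelEigenvalue ε z} = Set.range (fun k : ℕ => ((lam k : ℝ) : ℂ)) ∧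
      Filter.Tendsto (fun k : ℕ => lam k * ε / (π * (k + 1) / 2) ^ 2)
        Filter.atTop (nhds 1) := by
  obtain ⟨f, f', g, g', hbasis, hray⟩ := exists_airyBasis hAi hBi
  obtain ⟨b, hb, hb3⟩ : ∃ b : ℝ, 0 < b ∧ ε = b ^ 3 :=
    ⟨ε ^ ((1 : ℝ) / 3), by positivity, by
      rw [← Real.rpow_natCast, ← Real.rpow_mul hε.le]; norm_num⟩
  have hα₁pos : 0 < α₁ := hα₁.1.1
  have hbB : b < √3 * α₁ / 2 :=
    lt_of_pow_lt_pow_left₀ 3 (by positivity) (hb3 ▸ hε')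
  obtain ⟨s, hs, hs0, hdet, K, hK⟩ := hbasis.exists_seq_det_eq_zero hb hbB fun r hr => by
    have : α₁ ≤ r := hα₁.2 (hray ▸ hr)
    nlinarith [Real.sqrt_nonneg 3]
  have hb' : (b : ℂ) ≠ 0 := by exact_mod_cast hb.ne'
  have hmono : StrictMono fun k => s k / b := fun k l hkl => div_lt_div_of_pos_right (hs hkl) hb
  have hpos : ∀ k, 0 < s k / b := fun k => div_pos (hs0 k) hb
  have hsq : ∀ k, s k / b * ε = (b * √(s k)) ^ 2 := fun k => by
    rw [hb3, mul_pow, Real.sq_sqrt (hs0 k).le]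
    field_simp
  have hlim : Filter.Tendsto (fun k : ℕ => s k / b * ε / (π * (k + 1) / 2) ^ 2) Filter.atTop
      (nhds 1) := by
    simp only [hsq]
    exact tendsto_div_sq_of_abs_sub_lt fun k hk => by simpa only [mul_assoc] using hK k hk
  have hzero : ∀ k, dirichletDet f g b ((s k / b : ℝ) : ℂ) = 0 := fun k => by
    rw [dirichletDet, show (b : ℂ) * ((s k / b : ℝ) : ℂ) = s k by push_cast; field_simp]
    exact hdet k
  refine ⟨fun k => s k / b, hmono, hpos, ?_, ?_, hlim⟩
  · have h1 : Filter.Tendsto (fun k : ℕ => (π * ((k : ℝ) + 1) / 2) ^ 2 / ε) Filter.atTop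
        Filter.atTop := by
      refine ((Filter.tendsto_pow_atTop two_ne_zero).comp ?_).atTop_div_const hε
      exact ((Filter.tendsto_atTop_add_const_right _ _
        tendsto_natCast_atTop_atTop).const_mul_atTop Real.pi_pos).atTop_div_const two_pos
    refine (hlim.pos_mul_atTop one_pos h1).congr fun k => ?_
    have := Real.pi_ne_zero
    have : (k : ℝ) + 1 ≠ 0 := by positivity
    field_simp
  · refine Set.Subset.antisymm (fun z hz => ?_) ?_
    · refine mem_range_of_zero (hbasis.differentiable_dirichletDet b)
        (hbasis.dirichletDet_zero_ne_zero hb) hb hε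
        (fun R θ hR hθ => hbasis.norm_dirichletDet_le hb hb3 hR hθ) hmono hpos hzero (K := K) ?_
        (hbasis.dirichletDet_eq_zero_of_isModelEigenvalue hb hb3 hz)
      intro k hk
      rw [mul_comm, hsq]
      have h1 := (abs_lt.1 (hK k hk)).1
      exact pow_le_pow_left₀ (by positivity) (by linarith) 2
    · rintro _ ⟨k, rfl⟩
      exact hbasis.isModelEigenvalue_of_dirichletDet_eq_zero hb hb3 (hzero k)
end
end

section
/- For every ε > 0 and every real λ, λ is an eigenvalue of the model operator T(ε) if and only if there exists a real number a such that a·Ai(ε^{1/3}(λ − i)) + Bi(ε^{1/3}(λ − i)) = 0, where ε^{1/3} is the real cube root. In other words, each point (ε, λ) of the real spectral locus of the model family corresponds to a pair of complex conjugate zeros ε^{1/3}(λ ∓ i) of a real solution V_a = a·Ai + Bi of the Airy equation, and conversely every non-real zero ξ₀ of V_a with a ∈ ℝ gives the real spectral locus point ε = |Im ξ₀|³, λ = Re ξ₀/|Im ξ₀|. -/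
open Complex MeasureTheory Real

noncomputable section

/-- `w` is an entire solution of the Airy equation. -/
def IsAirySolution (w : ℂ → ℂ) : Prop :=
  Differentiable ℂ w ∧ Differentiable ℂ (deriv w) ∧ ∀ z : ℂ, deriv (deriv w) z = z * w z

/-- The Wronskian of two functions. -/
def wronskianAt (u v : ℂ → ℂ) (z : ℂ) : ℂ := u z * deriv v z - deriv u z * v z

theorem IsAiry.isAirySolution {w : ℂ → ℂ} {a b : ℝ} (h : IsAiry w a b) : IsAirySolution w :=
  ⟨h.1, h.2.1, h.2.2.1⟩

namespace IsAirySolution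

theorem wronskianAt_eq {u v : ℂ → ℂ} (hu : IsAirySolution u) (hv : IsAirySolution v) (z z' : ℂ) :
    wronskianAt u v z = wronskianAt u v z' := by
  have hd : ∀ z, HasDerivAt (wronskianAt u v) 0 z := by
    intro z
    have h := ((hu.1 z).hasDerivAt.mul (hv.2.1 z).hasDerivAt).sub
      ((hu.2.1 z).hasDerivAt.mul (hv.1 z).hasDerivAt)
    refine h.congr_deriv ?_
    rw [hu.2.2, hv.2.2]
    ring
  exact is_const_of_deriv_eq_zero (fun z => (hd z).differentiableAt) (fun z => (hd z).deriv) z z'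

/-- Coordinates of a solution with respect to two others, through Wronskians at a base point. -/
theorem mul_wronskianAt {w u v : ℂ → ℂ} (hw : IsAirySolution w) (hu : IsAirySolution u)
    (hv : IsAirySolution v) (z₀ z : ℂ) :
    w z * wronskianAt u v z₀ = u z * wronskianAt w v z₀ - v z * wronskianAt w u z₀ := by
  rw [hu.wronskianAt_eq hv z₀ z, hw.wronskianAt_eq hv z₀ z, hw.wronskianAt_eq hu z₀ z]
  simp only [wronskianAt]
  ring

theorem linear_comb {u v : ℂ → ℂ} (hu : IsAirySolution u) (hv : IsAirySolution v) (a : ℂ) :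
    IsAirySolution (fun z => a * u z + v z) ∧
      deriv (fun z => a * u z + v z) = fun z => a * deriv u z + deriv v z := by
  have h1 : deriv (fun z => a * u z + v z) = fun z => a * deriv u z + deriv v z := by
    funext z
    exact (((hu.1 z).hasDerivAt.const_mul a).add (hv.1 z).hasDerivAt).deriv
  have h2 : ∀ z, HasDerivAt (fun z => a * deriv u z + deriv v z)
      (z * (a * u z + v z)) z := fun z =>
    (((hu.2.1 z).hasDerivAt.const_mul a).add (hv.2.1 z).hasDerivAt).congr_deriv (by
      rw [hu.2.2, hv.2.2]; ring)
  refine ⟨⟨(hu.1.const_mul a).add hv.1, ?_, ?_⟩, h1⟩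
  · rw [h1]; exact fun z => (h2 z).differentiableAt
  · rw [h1]; exact fun z => (h2 z).deriv

theorem conj_conj {w : ℂ → ℂ} (hw : IsAirySolution w) :
    IsAirySolution (fun z => (starRingEnd ℂ) (w ((starRingEnd ℂ) z))) ∧
      deriv (fun z => (starRingEnd ℂ) (w ((starRingEnd ℂ) z))) =
        fun z => (starRingEnd ℂ) (deriv w ((starRingEnd ℂ) z)) := by
  have key : ∀ f : ℂ → ℂ, Differentiable ℂ f → ∀ z,
      HasDerivAt (fun z => (starRingEnd ℂ) (f ((starRingEnd ℂ) z)))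
        ((starRingEnd ℂ) (deriv f ((starRingEnd ℂ) z))) z := by
    intro f hf z
    have h := (hf ((starRingEnd ℂ) z)).hasDerivAt.conj_conj
    simpa [Function.comp_def] using h
  have h1 : deriv (fun z => (starRingEnd ℂ) (w ((starRingEnd ℂ) z))) =
      fun z => (starRingEnd ℂ) (deriv w ((starRingEnd ℂ) z)) :=
    funext fun z => (key w hw.1 z).deriv
  refine ⟨⟨fun z => (key w hw.1 z).differentiableAt, ?_, ?_⟩, h1⟩
  · rw [h1]; exact fun z => (key _ hw.2.1 z).differentiableAt
  · intro z
    rw [h1, (key _ hw.2.1 z).deriv, hw.2.2]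
    simp

/-- A solution tending to zero, with its derivative, along a horizontal half-line starting at a
non-real zero vanishes identically. -/
theorem eq_zero_of_tendsto {w : ℂ → ℂ} (hw : IsAirySolution w) {z₀ : ℂ} (him : z₀.im ≠ 0)
    (h0 : w z₀ = 0)
    (hlim : Filter.Tendsto (fun t : ℝ => w (z₀ + t)) Filter.atTop (nhds 0))
    (hlim' : Filter.Tendsto (fun t : ℝ => deriv w (z₀ + t)) Filter.atTop (nhds 0)) :
    w (z₀ + 1) = 0 ∧ deriv w (z₀ + 1) = 0 := by
  have hline : ∀ t : ℝ, HasDerivAt (fun t : ℝ => z₀ + (t : ℂ)) 1 t := fun t =>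
    (Complex.ofRealCLM.hasDerivAt (x := t)).const_add z₀
  have hu : ∀ t : ℝ, HasDerivAt (fun t : ℝ => w (z₀ + t)) (deriv w (z₀ + t)) t := fun t => by
    simpa [Function.comp_def] using HasDerivAt.scomp t (hw.1 (z₀ + t)).hasDerivAt (hline t)
  have hu' : ∀ t : ℝ, HasDerivAt (fun t : ℝ => deriv w (z₀ + t)) ((z₀ + t) * w (z₀ + t)) t :=
    fun t => by
      simpa [hw.2.2, Function.comp_def] using
        HasDerivAt.scomp t (hw.2.1 (z₀ + t)).hasDerivAt (hline t)
  set p : ℝ → ℝ := fun t =>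
    z₀.im * (deriv w (z₀ + t) * (starRingEnd ℂ) (w (z₀ + t))).im with hp
  have hp' : ∀ t : ℝ, HasDerivAt p (z₀.im ^ 2 * Complex.normSq (w (z₀ + t))) t := by
    intro t
    have h1 : HasDerivAt (fun t : ℝ => (starRingEnd ℂ) (w (z₀ + t)))
        ((starRingEnd ℂ) (deriv w (z₀ + t))) t :=
      Complex.conjCLE.toContinuousLinearMap.hasFDerivAt.comp_hasDerivAt t (hu t)
    have h2 := (hu' t).mul h1
    have h3 := (Complex.imCLM.hasFDerivAt.comp_hasDerivAt t h2).const_mul z₀.im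
    refine h3.congr_deriv ?_
    simp [Complex.normSq_apply]
    ring
  have hmono : Monotone p := monotone_of_hasDerivAt_nonneg hp' fun t =>
    mul_nonneg (sq_nonneg _) (Complex.normSq_nonneg _)
  have hp0 : p 0 = 0 := by simp [hp, h0]
  have hplim : Filter.Tendsto p Filter.atTop (nhds 0) := by
    have h1 := (Complex.continuous_conj.tendsto 0).comp hlim
    have h2 := ((Complex.continuous_im.tendsto _).comp (hlim'.mul h1)).const_mul z₀.im
    simp only [map_zero, mul_zero, Complex.zero_im] at h2
    exact h2
  have hpz : ∀ t, 0 ≤ t → p t = 0 := fun t ht =>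
    le_antisymm (hmono.ge_of_tendsto hplim t) (hp0 ▸ hmono ht)
  have hwz : ∀ t : ℝ, 0 < t → w (z₀ + t) = 0 := by
    intro t ht
    have hev : p =ᶠ[nhds t] fun _ => 0 := by
      filter_upwards [lt_mem_nhds ht] with s hs using hpz s hs.le
    have h := (hp' t).unique ((hasDerivAt_const t (0 : ℝ)).congr_of_eventuallyEq hev)
    have : Complex.normSq (w (z₀ + t)) = 0 := by
      rcases mul_eq_zero.1 h with h | h
      · exact absurd (pow_eq_zero_iff two_ne_zero |>.1 h) him
      · exact h
    exact Complex.normSq_eq_zero.1 this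
  refine ⟨by simpa using hwz 1 one_pos, ?_⟩
  have hev : (fun t : ℝ => w (z₀ + t)) =ᶠ[nhds 1] fun _ => 0 := by
    filter_upwards [lt_mem_nhds (one_pos : (0 : ℝ) < 1)] with s hs using hwz s hs
  simpa using (hu 1).unique ((hasDerivAt_const (1 : ℝ) (0 : ℂ)).congr_of_eventuallyEq hev)

end IsAirySolution

/-- The moments `∫₀^∞ sⁿ exp(-s³/3 - z s) ds`. -/
def cubicLaplace (n : ℕ) (z : ℂ) : ℂ :=
  ∫ s : ℝ in Set.Ioi 0, (s : ℂ) ^ n * Complex.exp (-(s : ℂ) ^ 3 / 3 - z * s)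

theorem norm_cubicLaplace_integrand {n : ℕ} {z : ℂ} {s : ℝ} (hs : 0 < s) :
    ‖(s : ℂ) ^ n * Complex.exp (-(s : ℂ) ^ 3 / 3 - z * s)‖ =
      s ^ n * Real.exp (-s ^ 3 / 3 - z.re * s) := by
  rw [norm_mul, norm_pow, Complex.norm_exp, Complex.norm_real, Real.norm_of_nonneg hs.le]
  congr 2
  have : -(s : ℂ) ^ 3 / 3 - z * s = ((-s ^ 3 / 3 : ℝ) : ℂ) - z * s := by push_cast; ring
  rw [this]
  simp [-Complex.ofReal_div, -Complex.ofReal_neg, -Complex.ofReal_pow]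

theorem integrableOn_pow_mul_exp_cubic (n : ℕ) (a : ℝ) :
    IntegrableOn (fun s : ℝ => s ^ n * Real.exp (-s ^ 3 / 3 - a * s)) (Set.Ioi 0) := by
  have hI : IntegrableOn (fun s : ℝ => s ^ n * Real.exp (-s)) (Set.Ioi 0) := by
    have h := Real.GammaIntegral_convergent (s := n + 1) (by positivity)
    refine h.congr_fun (fun s hs => ?_) measurableSet_Ioi
    simp [mul_comm]
  have hI' := hI.const_mul (Real.exp ((1 + |a|) ^ 2 * 2))
  refine hI'.mono' (Continuous.aestronglyMeasurable (by fun_prop)) ?_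
  filter_upwards [ae_restrict_mem measurableSet_Ioi] with s hs
  have hs : 0 < s := hs
  rw [Real.norm_of_nonneg (by positivity), mul_left_comm, ← Real.exp_add]
  refine mul_le_mul_of_nonneg_left (Real.exp_le_exp.2 ?_) (by positivity)
  set b := 1 + |a| with hb
  have hb1 : 1 ≤ b := by have := abs_nonneg a; linarith
  have ha : -a * s ≤ (b - 1) * s := mul_le_mul_of_nonneg_right (by
    rw [hb]; have := neg_le_abs a; linarith) hs.le
  have hkey : b * s ≤ s ^ 3 / 3 + b ^ 2 * 2 := by
    rcases le_total s (2 * b) with h | h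
    · have : b * s ≤ b * (2 * b) := mul_le_mul_of_nonneg_left h (by linarith)
      have : 0 ≤ s ^ 3 / 3 := by positivity
      nlinarith
    · have h2 : 3 * b ≤ s ^ 2 := by nlinarith
      have : 3 * b * s ≤ s ^ 2 * s := mul_le_mul_of_nonneg_right h2 hs.le
      nlinarith [sq_nonneg b]
  linarith

theorem integrableOn_cubicLaplace (n : ℕ) (z : ℂ) :
    IntegrableOn (fun s : ℝ => (s : ℂ) ^ n * Complex.exp (-(s : ℂ) ^ 3 / 3 - z * s))
      (Set.Ioi 0) := by
  refine (integrableOn_pow_mul_exp_cubic n z.re).mono'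
    (Continuous.aestronglyMeasurable (by fun_prop)) ?_
  filter_upwards [ae_restrict_mem measurableSet_Ioi] with s hs
  exact (norm_cubicLaplace_integrand hs).le

theorem hasDerivAt_cubicLaplace (n : ℕ) (z : ℂ) :
    HasDerivAt (cubicLaplace n) (-cubicLaplace (n + 1) z) z := by
  have h := hasDerivAt_integral_of_dominated_loc_of_deriv_le
    (μ := volume.restrict (Set.Ioi (0 : ℝ)))
    (F := fun (w : ℂ) (s : ℝ) => (s : ℂ) ^ n * Complex.exp (-(s : ℂ) ^ 3 / 3 - w * s))
    (F' := fun (w : ℂ) (s : ℝ) =>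
      -((s : ℂ) ^ (n + 1) * Complex.exp (-(s : ℂ) ^ 3 / 3 - w * s)))
    (bound := fun s : ℝ => s ^ (n + 1) * Real.exp (-s ^ 3 / 3 - (z.re - 1) * s))
    (x₀ := z) (s := Metric.ball z 1) (Metric.ball_mem_nhds z one_pos)
    (Filter.Eventually.of_forall fun w => Continuous.aestronglyMeasurable (by fun_prop))
    (integrableOn_cubicLaplace n z)
    (Continuous.aestronglyMeasurable (by fun_prop))
    (by
      filter_upwards [ae_restrict_mem measurableSet_Ioi] with s hs w hw
      have hs : 0 < s := hs
      rw [norm_neg, norm_cubicLaplace_integrand hs]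
      have hre : z.re - 1 ≤ w.re := by
        have h1 := Complex.abs_re_le_norm (w - z)
        rw [Metric.mem_ball, dist_eq_norm] at hw
        rw [Complex.sub_re] at h1
        linarith [neg_abs_le (w.re - z.re)]
      have := mul_le_mul_of_nonneg_right hre hs.le
      gcongr)
    (integrableOn_pow_mul_exp_cubic (n + 1) (z.re - 1))
    (by
      refine Filter.Eventually.of_forall fun s w _ => ?_
      have h1 : HasDerivAt (fun w : ℂ => -(s : ℂ) ^ 3 / 3 - w * s) (-(1 * (s : ℂ))) w :=
        ((hasDerivAt_id w).mul_const (s : ℂ)).const_sub _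
      refine (h1.cexp.const_mul ((s : ℂ) ^ n)).congr_deriv ?_
      ring)
  refine h.2.congr_deriv ?_
  rw [integral_neg, cubicLaplace]

/-- Integration by parts for the moments. -/
theorem cubicLaplace_two_add (z : ℂ) : cubicLaplace 2 z + z * cubicLaplace 0 z = 1 := by
  have hderiv : ∀ s : ℝ, HasDerivAt (fun s : ℝ => Complex.exp (-(s : ℂ) ^ 3 / 3 - z * s))
      (-((s : ℂ) ^ 2 * Complex.exp (-(s : ℂ) ^ 3 / 3 - z * s) +
        z * ((s : ℂ) ^ 0 * Complex.exp (-(s : ℂ) ^ 3 / 3 - z * s)))) s := by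
    intro s
    have h0 : HasDerivAt (fun s : ℂ => -s ^ 3 / 3 - z * s) (-(3 * (s : ℂ) ^ 2) / 3 - z) (s : ℂ) := by
      have := (((hasDerivAt_pow 3 (s : ℂ)).neg).div_const 3).sub
        ((hasDerivAt_id (s : ℂ)).const_mul z)
      simpa [Pi.sub_def] using this
    refine h0.cexp.comp_ofReal.congr_deriv ?_
    ring
  have hint := ((integrableOn_cubicLaplace 2 z).add
    ((integrableOn_cubicLaplace 0 z).const_mul z)).neg
  have hlim : Filter.Tendsto (fun s : ℝ => Complex.exp (-(s : ℂ) ^ 3 / 3 - z * s))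
      Filter.atTop (nhds 0) :=
    tendsto_zero_of_hasDerivAt_of_integrableOn_Ioi (a := 0) (fun s _ => hderiv s) hint
      (by simpa using integrableOn_cubicLaplace 0 z)
  have h := integral_Ioi_of_hasDerivAt_of_tendsto' (a := (0 : ℝ)) (fun s _ => hderiv s) hint hlim
  rw [integral_neg, integral_add (integrableOn_cubicLaplace 2 z)
    ((integrableOn_cubicLaplace 0 z).const_mul z), integral_const_mul] at h
  simp only [Complex.ofReal_zero] at h
  norm_num at h
  simp only [cubicLaplace, pow_zero, one_mul]
  linear_combination -h

theorem tendsto_cubicLaplace (n : ℕ) {ι : Type*} {l : Filter ι} [l.IsCountablyGenerated]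
    {f : ι → ℂ} (hf : Filter.Tendsto (fun i => (f i).re) l Filter.atTop) :
    Filter.Tendsto (fun i => cubicLaplace n (f i)) l (nhds 0) := by
  have h := tendsto_integral_filter_of_dominated_convergence
    (μ := volume.restrict (Set.Ioi (0 : ℝ))) (l := l)
    (F := fun i (s : ℝ) => (s : ℂ) ^ n * Complex.exp (-(s : ℂ) ^ 3 / 3 - f i * s))
    (f := fun _ => 0)
    (fun s : ℝ => s ^ n * Real.exp (-s ^ 3 / 3 - 0 * s))
    (Filter.Eventually.of_forall fun i => Continuous.aestronglyMeasurable (by fun_prop))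
    (by
      filter_upwards [hf.eventually_ge_atTop 0] with i hi
      filter_upwards [ae_restrict_mem measurableSet_Ioi] with s hs
      have hs : 0 < s := hs
      rw [norm_cubicLaplace_integrand hs]
      have := mul_le_mul_of_nonneg_right hi hs.le
      gcongr)
    (integrableOn_pow_mul_exp_cubic n 0)
    (by
      filter_upwards [ae_restrict_mem measurableSet_Ioi] with s hs
      have hs : 0 < s := hs
      rw [tendsto_zero_iff_norm_tendsto_zero]
      simp only [norm_cubicLaplace_integrand hs]
      have h1 : Filter.Tendsto (fun i => -s ^ 3 / 3 - (f i).re * s) l Filter.atBot := by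
        simpa [sub_eq_add_neg] using Filter.tendsto_atBot_add_const_left l (-s ^ 3 / 3)
          (Filter.tendsto_neg_atTop_atBot.comp (hf.atTop_mul_const hs))
      simpa using (Real.tendsto_exp_atBot.comp h1).const_mul (s ^ n))
  simpa [cubicLaplace] using h

theorem cubicLaplace_at_zero (n : ℕ) : cubicLaplace n 0 =
    (((3 : ℝ) ^ (((n : ℝ) + 1) / 3) * (1 / 3) * Real.Gamma (((n : ℝ) + 1) / 3) : ℝ) : ℂ) := by
  have hn : (-1 : ℝ) < n := by have := n.cast_nonneg (α := ℝ); linarith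
  have h := integral_rpow_mul_exp_neg_mul_rpow (p := 3) (q := n) (b := 1 / 3) (by norm_num)
    hn (by norm_num)
  have h3 : ((1 : ℝ) / 3) ^ (-((n : ℝ) + 1) / 3) = 3 ^ (((n : ℝ) + 1) / 3) := by
    rw [one_div, Real.inv_rpow (by norm_num), ← Real.rpow_neg (by norm_num)]
    ring_nf
  rw [h3] at h
  rw [← h, cubicLaplace, ← integral_complex_ofReal]
  refine setIntegral_congr_fun measurableSet_Ioi fun s _ => ?_
  have : (s : ℝ) ^ (3 : ℝ) = s ^ 3 := by exact_mod_cast Real.rpow_natCast s 3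
  simp only [Real.rpow_natCast, this]
  push_cast
  ring_nf

/-- The primitive sixth root of unity `exp(iπ/3)`. -/
def sixthRoot : ℂ := ⟨1 / 2, Real.sqrt 3 / 2⟩

theorem sixthRoot_sq : sixthRoot ^ 2 = sixthRoot - 1 := by
  have h := Real.mul_self_sqrt (show (0 : ℝ) ≤ 3 by norm_num)
  rw [sq]
  apply Complex.ext
  · simp [sixthRoot]; linarith
  · simp [sixthRoot]; ring

/-- The contour integral representing the recessive Airy solution, up to a constant factor. -/
def airyContour (z : ℂ) : ℂ :=
  sixthRoot * cubicLaplace 0 (sixthRoot * z) -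
    (1 - sixthRoot) * cubicLaplace 0 ((1 - sixthRoot) * z)

theorem hasDerivAt_cubicLaplace_const_mul (n : ℕ) (c z : ℂ) :
    HasDerivAt (fun z => cubicLaplace n (c * z)) (-(c * cubicLaplace (n + 1) (c * z))) z := by
  have h := (hasDerivAt_cubicLaplace n (c * z)).comp z ((hasDerivAt_id z).const_mul c)
  refine h.congr_deriv ?_
  ring

theorem deriv_airyContour : deriv airyContour = fun z =>
    (1 - sixthRoot) ^ 2 * cubicLaplace 1 ((1 - sixthRoot) * z) -
      sixthRoot ^ 2 * cubicLaplace 1 (sixthRoot * z) := by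
  funext z
  have h := ((hasDerivAt_cubicLaplace_const_mul 0 sixthRoot z).const_mul sixthRoot).sub
    ((hasDerivAt_cubicLaplace_const_mul 0 (1 - sixthRoot) z).const_mul (1 - sixthRoot))
  exact (h.congr_deriv (by ring)).deriv

theorem isAirySolution_airyContour : IsAirySolution airyContour := by
  have h2 : ∀ z, HasDerivAt (fun z =>
      (1 - sixthRoot) ^ 2 * cubicLaplace 1 ((1 - sixthRoot) * z) -
      sixthRoot ^ 2 * cubicLaplace 1 (sixthRoot * z)) (z * airyContour z) z := by
    intro z
    have h := ((hasDerivAt_cubicLaplace_const_mul 1 (1 - sixthRoot) z).const_mul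
      ((1 - sixthRoot) ^ 2)).sub
      ((hasDerivAt_cubicLaplace_const_mul 1 sixthRoot z).const_mul (sixthRoot ^ 2))
    refine h.congr_deriv ?_
    have e1 := cubicLaplace_two_add (sixthRoot * z)
    have e2 := cubicLaplace_two_add ((1 - sixthRoot) * z)
    have s3 : sixthRoot ^ 3 = -1 := by
      linear_combination (sixthRoot + 1) * sixthRoot_sq
    have t3 : (1 - sixthRoot) ^ 3 = -1 := by
      linear_combination (2 - sixthRoot) * sixthRoot_sq
    simp only [airyContour]
    norm_num
    linear_combination (-cubicLaplace 2 ((1 - sixthRoot) * z)) * t3 +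
      cubicLaplace 2 (sixthRoot * z) * s3 - e1 + e2
  refine ⟨fun z => ?_, ?_, ?_⟩
  · exact (((hasDerivAt_cubicLaplace_const_mul 0 sixthRoot z).const_mul sixthRoot).sub
      ((hasDerivAt_cubicLaplace_const_mul 0 (1 - sixthRoot) z).const_mul
        (1 - sixthRoot))).differentiableAt
  · rw [deriv_airyContour]; exact fun z => (h2 z).differentiableAt
  · rw [deriv_airyContour]; exact fun z => (h2 z).deriv

theorem tendsto_airyContour (z₀ : ℂ) :
    Filter.Tendsto (fun t : ℝ => airyContour (z₀ + t)) Filter.atTop (nhds 0) ∧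
      Filter.Tendsto (fun t : ℝ => deriv airyContour (z₀ + t)) Filter.atTop (nhds 0) := by
  have key : ∀ c : ℂ, 0 < c.re → ∀ n, Filter.Tendsto
      (fun t : ℝ => cubicLaplace n (c * (z₀ + t))) Filter.atTop (nhds 0) := by
    intro c hc n
    apply tendsto_cubicLaplace
    have : (fun t : ℝ => (c * (z₀ + t)).re) = fun t => (c * z₀).re + c.re * t := by
      funext t
      simp
      ring
    rw [this]
    exact Filter.tendsto_atTop_add_const_left _ _ (Filter.tendsto_id.const_mul_atTop hc)
  have h1 := key sixthRoot (by norm_num [sixthRoot])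
  have h2 := key (1 - sixthRoot) (by norm_num [sixthRoot])
  constructor
  · simpa [airyContour] using ((h1 0).const_mul sixthRoot).sub ((h2 0).const_mul (1 - sixthRoot))
  · simpa [deriv_airyContour] using
      ((h2 1).const_mul ((1 - sixthRoot) ^ 2)).sub ((h1 1).const_mul (sixthRoot ^ 2))

theorem airyContour_zero_ne : airyContour 0 ≠ 0 := by
  have h : airyContour 0 = (2 * sixthRoot - 1) * cubicLaplace 0 0 := by
    simp only [airyContour, mul_zero]; ring
  rw [h, cubicLaplace_at_zero]
  refine mul_ne_zero ?_ ?_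
  · intro h0
    have := congrArg Complex.im h0
    simp [sixthRoot] at this
  · have : 0 < Real.Gamma (((0 : ℕ) + 1 : ℝ) / 3) := Real.Gamma_pos_of_pos (by norm_num)
    exact_mod_cast (by positivity : (0 : ℝ) < 3 ^ ((((0 : ℕ) : ℝ) + 1) / 3) * (1 / 3) *
      Real.Gamma ((((0 : ℕ) : ℝ) + 1) / 3)).ne'

theorem wronskianAt_Ai_Bi_ne {Ai Bi : ℂ → ℂ} (hAi : IsAiryAi Ai) (hBi : IsAiryBi Bi) (z : ℂ) :
    wronskianAt Ai Bi z ≠ 0 := by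
  rw [hAi.isAirySolution.wronskianAt_eq hBi.isAirySolution z 0]
  obtain ⟨-, -, -, a0, a1⟩ := hAi
  obtain ⟨-, -, -, b0, b1⟩ := hBi
  rw [wronskianAt, a0, a1, b0, b1, neg_div (Real.Gamma (1 / 3)), Complex.ofReal_neg, neg_mul, sub_neg_eq_add,
    ← Complex.ofReal_mul, ← Complex.ofReal_mul, ← Complex.ofReal_add, Complex.ofReal_ne_zero]
  have g1 : 0 < Real.Gamma (1 / 3) := Real.Gamma_pos_of_pos (by norm_num)
  have g2 : 0 < Real.Gamma (2 / 3) := Real.Gamma_pos_of_pos (by norm_num)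
  positivity

theorem wronskianAt_airyContour_Ai {Ai : ℂ → ℂ} (hAi : IsAiryAi Ai) :
    wronskianAt airyContour Ai 0 = 0 := by
  obtain ⟨-, -, -, a0, a1⟩ := hAi
  have g1 : 0 < Real.Gamma (1 / 3) := Real.Gamma_pos_of_pos (by norm_num)
  have g2 : 0 < Real.Gamma (2 / 3) := Real.Gamma_pos_of_pos (by norm_num)
  have e : (3 : ℝ) ^ ((((0 : ℕ) : ℝ) + 1) / 3) * (1 / 3) * Real.Gamma ((((0 : ℕ) : ℝ) + 1) / 3) *
      (-((3 : ℝ) ^ (-(1 : ℝ) / 3)) / Real.Gamma (1 / 3)) +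
      (3 : ℝ) ^ ((((1 : ℕ) : ℝ) + 1) / 3) * (1 / 3) * Real.Gamma ((((1 : ℕ) : ℝ) + 1) / 3) *
      ((3 : ℝ) ^ (-(2 : ℝ) / 3) / Real.Gamma (2 / 3)) = 0 := by
    have r1 : (3 : ℝ) ^ ((1 : ℝ) / 3) * (3 : ℝ) ^ (-(1 : ℝ) / 3) = 1 := by
      rw [← Real.rpow_add (by norm_num)]; norm_num
    have r2 : (3 : ℝ) ^ ((2 : ℝ) / 3) * (3 : ℝ) ^ (-(2 : ℝ) / 3) = 1 := by
      rw [← Real.rpow_add (by norm_num)]; norm_num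
    have n1 : (((0 : ℕ) : ℝ) + 1) / 3 = 1 / 3 := by norm_num
    have n2 : (((1 : ℕ) : ℝ) + 1) / 3 = 2 / 3 := by norm_num
    rw [n1, n2]
    generalize (3 : ℝ) ^ (-(1 : ℝ) / 3) = c₁ at r1 ⊢
    generalize (3 : ℝ) ^ (-(2 : ℝ) / 3) = c₂ at r2 ⊢
    field_simp
    linear_combination r2 - r1
  have e' := congrArg (Complex.ofReal) e
  rw [Complex.ofReal_add, Complex.ofReal_mul, Complex.ofReal_mul _ (_ / Real.Gamma (2 / 3)),
    ← cubicLaplace_at_zero, ← cubicLaplace_at_zero, ← a0, ← a1, Complex.ofReal_zero] at e'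
  rw [wronskianAt, deriv_airyContour]
  simp only [airyContour, mul_zero]
  linear_combination (2 * sixthRoot - 1) * e'

/-- The Airy function `Ai` has no non-real zeros. -/
theorem Ai_ne_zero_of_im_ne_zero {Ai Bi : ℂ → ℂ} (hAi : IsAiryAi Ai) (hBi : IsAiryBi Bi) {z : ℂ}
    (hz : z.im ≠ 0) : Ai z ≠ 0 := by
  intro h0
  have hA := hAi.isAirySolution
  have hB := hBi.isAirySolution
  have hW := isAirySolution_airyContour
  have hne := wronskianAt_Ai_Bi_ne hAi hBi
  have h1 : airyContour z = 0 := by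
    have h := hW.mul_wronskianAt hA hB 0 z
    rw [h0, wronskianAt_airyContour_Ai hAi] at h
    simpa [hne] using h
  obtain ⟨h2, h3⟩ := hW.eq_zero_of_tendsto hz h1 (tendsto_airyContour z).1 (tendsto_airyContour z).2
  have h := hW.mul_wronskianAt hA hB (z + 1) 0
  simp only [wronskianAt.eq_1 airyContour, h2, h3] at h
  simp [hne, airyContour_zero_ne] at h

theorem IsAiry.map_conj {w Ai Bi : ℂ → ℂ} {a b : ℝ} (hw : IsAiry w a b) (hAi : IsAiryAi Ai)
    (hBi : IsAiryBi Bi) (z : ℂ) : w ((starRingEnd ℂ) z) = (starRingEnd ℂ) (w z) := by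
  have hA := hAi.isAirySolution
  have hB := hBi.isAirySolution
  obtain ⟨hc, hd⟩ := hw.isAirySolution.conj_conj
  have h1 := hc.mul_wronskianAt hA hB 0 ((starRingEnd ℂ) z)
  have h2 := hw.isAirySolution.mul_wronskianAt hA hB 0 ((starRingEnd ℂ) z)
  obtain ⟨-, -, -, w0, w1⟩ := hw
  have e : ∀ v, wronskianAt (fun z => (starRingEnd ℂ) (w ((starRingEnd ℂ) z))) v 0 =
      wronskianAt w v 0 := by
    intro v
    simp [wronskianAt, hd, w0, w1]
  rw [e, e, ← h2] at h1
  have := mul_right_cancel₀ (wronskianAt_Ai_Bi_ne hAi hBi 0) h1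
  simpa using this.symm

/-- The rotated Airy solutions `w(k(μ - i x))` along the real line. -/
theorem IsAirySolution.hasDerivAt_rotated {w : ℂ → ℂ} (hw : IsAirySolution w) (k μ : ℂ) (x : ℝ) :
    HasDerivAt (fun x : ℝ => w (k * (μ - Complex.I * x)))
      (-(k * Complex.I) * deriv w (k * (μ - Complex.I * x))) x ∧
    HasDerivAt (fun x : ℝ => -(k * Complex.I) * deriv w (k * (μ - Complex.I * x)))
      (k ^ 3 * (Complex.I * x - μ) * w (k * (μ - Complex.I * x))) x := by
  have hline : HasDerivAt (fun x : ℂ => k * (μ - Complex.I * x)) (-(k * Complex.I)) (x : ℂ) :=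
    ((((hasDerivAt_id (x : ℂ)).const_mul Complex.I).const_sub μ).const_mul k).congr_deriv (by ring)
  constructor
  · refine ((hw.1 _).hasDerivAt.comp (x : ℂ) hline).comp_ofReal.congr_deriv ?_
    ring
  · refine (((hw.2.1 _).hasDerivAt.comp (x : ℂ) hline).comp_ofReal.const_mul
      (-(k * Complex.I))).congr_deriv ?_
    rw [hw.2.2]
    linear_combination k ^ 3 * (μ - Complex.I * x) * w (k * (μ - Complex.I * x)) * Complex.I_sq

/-- Wronskians of solutions of the same second-order linear equation are constant. -/
theorem wronskian_eq_of_hasDerivAt {y y' u u' q : ℝ → ℂ} {a b : ℝ}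
    (hy : ∀ x ∈ Set.Icc a b, HasDerivAt y (y' x) x)
    (hy' : ∀ x ∈ Set.Icc a b, HasDerivAt y' (q x * y x) x)
    (hu : ∀ x ∈ Set.Icc a b, HasDerivAt u (u' x) x)
    (hu' : ∀ x ∈ Set.Icc a b, HasDerivAt u' (q x * u x) x)
    {s t : ℝ} (hs : s ∈ Set.Icc a b) (ht : t ∈ Set.Icc a b) :
    y s * u' s - y' s * u s = y t * u' t - y' t * u t := by
  have h := (convex_Icc a b).norm_image_sub_le_of_norm_hasDerivWithin_le (C := 0)
    (f := fun x => y x * u' x - y' x * u x) (f' := fun _ => 0)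
    (fun x hx => ((((hy x hx).mul (hu' x hx)).sub ((hy' x hx).mul (hu x hx))).congr_deriv
      (by ring)).hasDerivWithinAt) (by simp) ht hs
  simpa [sub_eq_zero] using h

/-- A real number `λ` is an eigenvalue of the model operator `T(ε)` iff the point
`ξ = ε^{1/3}(λ − i)` is a zero of a real solution `V_a = a·Ai + Bi` of the Airy equation:
the real spectral locus is parametrized by the complex zeros of real Airy solutions. -/
theorem real_spectral_locus_via_real_airy_solutions (Ai Bi : ℂ → ℂ)
    (hAi : IsAiryAi Ai) (hBi : IsAiryBi Bi)
    (ε : ℝ) (hε : 0 < ε) (lam : ℝ) :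
    IsModelEigenvalue ε (lam : ℂ) ↔
      ∃ a : ℝ, (a : ℂ) * Ai (((ε ^ ((1:ℝ)/3) : ℝ) : ℂ) * ((lam : ℂ) - Complex.I))
        + Bi (((ε ^ ((1:ℝ)/3) : ℝ) : ℂ) * ((lam : ℂ) - Complex.I)) = 0 := by
  have hA := hAi.isAirySolution
  have hB := hBi.isAirySolution
  have hne := wronskianAt_Ai_Bi_ne hAi hBi
  have hk3 : (((ε ^ ((1 : ℝ) / 3) : ℝ) : ℂ)) ^ 3 = ε := by
    rw [← Complex.ofReal_pow, ← Real.rpow_natCast, ← Real.rpow_mul hε.le]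
    norm_num
  have hkpos : 0 < ε ^ ((1 : ℝ) / 3) := Real.rpow_pos_of_pos hε _
  generalize ε ^ ((1 : ℝ) / 3) = k at hk3 hkpos
  have hε0 : (ε : ℂ) ≠ 0 := by exact_mod_cast hε.ne'
  have hk0 : (k : ℂ) ≠ 0 := by exact_mod_cast hkpos.ne'
  set ξ : ℂ := (k : ℂ) * ((lam : ℂ) - Complex.I) with hξ
  have hξ1 : (k : ℂ) * ((lam : ℂ) - Complex.I * ((1 : ℝ) : ℂ)) = ξ := by simp [hξ]
  have hξ2 : (k : ℂ) * ((lam : ℂ) - Complex.I * ((-1 : ℝ) : ℂ)) = (starRingEnd ℂ) ξ := by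
    simp [hξ]
  have hξim : ξ.im ≠ 0 := by simpa [hξ] using hkpos.ne'
  have hAξ := Ai_ne_zero_of_im_ne_zero hAi hBi hξim
  have hAc := hAi.map_conj hAi hBi ξ
  have hBc := hBi.map_conj hAi hBi ξ
  have hm1 : (-1 : ℝ) ∈ Set.Icc (-1 : ℝ) 1 := by norm_num
  have hp1 : (1 : ℝ) ∈ Set.Icc (-1 : ℝ) 1 := by norm_num
  constructor
  · rintro ⟨y, hy2, ⟨x₀, hx₀, hyx₀⟩, hode, hy1, hy1'⟩
    have hyd : ∀ x, HasDerivAt y (deriv y x) x := fun x =>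
      (hy2.differentiable (by norm_num) x).hasDerivAt
    have hy2' : ContDiff ℝ 1 (deriv y) := by
      have : ContDiff ℝ (1 + 1) y := by simpa [one_add_one_eq_two] using hy2
      exact (contDiff_succ_iff_deriv.1 this).2.2
    have hode' : ∀ x ∈ Set.Icc (-1 : ℝ) 1,
        deriv (deriv y) x = (k : ℂ) ^ 3 * (Complex.I * x - lam) * y x := by
      have hcl : IsClosed {x : ℝ | deriv (deriv y) x =
          (k : ℂ) ^ 3 * (Complex.I * x - lam) * y x} := by
        have c1 : Continuous (deriv (deriv y)) := hy2'.continuous_deriv le_rfl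
        have c2 : Continuous y := hy2.continuous
        exact isClosed_eq c1 (by fun_prop)
      have hsub : Set.Ioo (-1 : ℝ) 1 ⊆ {x : ℝ | deriv (deriv y) x =
          (k : ℂ) ^ 3 * (Complex.I * x - lam) * y x} := by
        intro x hx
        have h := hode x hx
        simp only [Set.mem_ofPred_eq, hk3]
        field_simp at h
        linear_combination -h
      have := hcl.closure_subset_iff.2 hsub
      rwa [closure_Ioo (by norm_num)] at this
    have hydd : ∀ x ∈ Set.Icc (-1 : ℝ) 1, HasDerivAt (deriv y)
        ((k : ℂ) ^ 3 * (Complex.I * x - lam) * y x) x := fun x hx =>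
      hode' x hx ▸ (hy2'.differentiable (by norm_num) x).hasDerivAt
    have hwr : ∀ w, IsAirySolution w → ∀ s ∈ Set.Icc (-1 : ℝ) 1, ∀ t ∈ Set.Icc (-1 : ℝ) 1, _ :=
      fun w hw s hs t ht => wronskian_eq_of_hasDerivAt (fun x _ => hyd x) hydd
        (fun x _ => (hw.hasDerivAt_rotated k lam x).1)
        (fun x _ => (hw.hasDerivAt_rotated k lam x).2) hs ht
    have hy'1 : deriv y 1 ≠ 0 := by
      intro h0
      have ha := hwr Ai hA x₀ hx₀ 1 hp1
      have hb := hwr Bi hB x₀ hx₀ 1 hp1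
      rw [hy1', h0] at ha hb
      have hw := hne (k * (lam - Complex.I * x₀))
      have : y x₀ * ((k : ℂ) * Complex.I * wronskianAt Ai Bi (k * (lam - Complex.I * x₀))) = 0 := by
        rw [wronskianAt]
        linear_combination Bi (k * (lam - Complex.I * x₀)) * ha -
          Ai (k * (lam - Complex.I * x₀)) * hb
      simp [hyx₀, hk0, hw] at this
    have ha := hwr Ai hA (-1) hm1 1 hp1
    have hb := hwr Bi hB (-1) hm1 1 hp1
    rw [hy1, hy1', hξ1, hξ2] at ha hb
    rw [hAc] at ha
    rw [hBc] at hb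
    have hAcξ : (starRingEnd ℂ) (Ai ξ) ≠ 0 := by simpa using hAξ
    have hreal : (starRingEnd ℂ) (Bi ξ / Ai ξ) = Bi ξ / Ai ξ := by
      rw [map_div₀, div_eq_div_iff hAcξ hAξ]
      refine mul_left_cancel₀ hy'1 ?_
      linear_combination (starRingEnd ℂ) (Bi ξ) * ha - (starRingEnd ℂ) (Ai ξ) * hb
    obtain ⟨r, hr⟩ := Complex.conj_eq_iff_real.1 hreal
    refine ⟨-r, ?_⟩
    rw [Complex.ofReal_neg, ← hr]
    field_simp
    ring
  · rintro ⟨a, ha⟩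
    obtain ⟨hV, hV'⟩ := hA.linear_comb hB a
    set V : ℂ → ℂ := fun z => a * Ai z + Bi z with hVdef
    have hd := hV.hasDerivAt_rotated k lam
    have hderiv : deriv (fun x : ℝ => V (k * (lam - Complex.I * x))) =
        fun x : ℝ => -(k * Complex.I) * deriv V (k * (lam - Complex.I * x)) :=
      funext fun x => (hd x).1.deriv
    have hderiv2 : deriv (fun x : ℝ => -(k * Complex.I) * deriv V (k * (lam - Complex.I * x))) =
        fun x : ℝ => (k : ℂ) ^ 3 * (Complex.I * x - lam) * V (k * (lam - Complex.I * x)) :=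
      funext fun x => (hd x).2.deriv
    refine ⟨fun x : ℝ => V (k * (lam - Complex.I * x)), ?_, ?_, ?_, ?_, ?_⟩
    · have hVc : ContDiff ℝ 2 V := (hV.1.contDiff (n := 2)).restrict_scalars ℝ
      have hof : ContDiff ℝ 2 (fun x : ℝ => (x : ℂ)) := Complex.ofRealCLM.contDiff
      exact hVc.comp (contDiff_const.mul (contDiff_const.sub (contDiff_const.mul hof)))
    · by_contra! hall
      have h0 : V (k * (lam - Complex.I * ((0 : ℝ) : ℂ))) = 0 := hall 0 (by norm_num)
      have hev : (fun x : ℝ => V (k * (lam - Complex.I * x))) =ᶠ[nhds 0] fun _ => 0 := by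
        filter_upwards [Icc_mem_nhds (show (-1 : ℝ) < 0 by norm_num) one_pos] with x hx
          using hall x hx
      have h1 := (hd 0).1.unique ((hasDerivAt_const (0 : ℝ) (0 : ℂ)).congr_of_eventuallyEq hev)
      have h1' : deriv V (k * (lam - Complex.I * ((0 : ℝ) : ℂ))) = 0 := by
        simpa [hk0] using h1
      refine hne (k * (lam - Complex.I * ((0 : ℝ) : ℂ))) ?_
      rw [hV'] at h1'
      simp only [hVdef] at h0 h1'
      rw [wronskianAt]
      linear_combination Ai (k * (lam - Complex.I * ((0 : ℝ) : ℂ))) * h1' -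
        deriv Ai (k * (lam - Complex.I * ((0 : ℝ) : ℂ))) * h0
    · intro x _
      rw [hderiv, hderiv2]
      simp only [hk3]
      field_simp
      ring
    · simp only [hξ2, hVdef, hAc, hBc]
      have := congrArg (starRingEnd ℂ) ha
      simpa using this
    · simpa only [hξ1] using ha
end
end
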